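/- Let 𝒯 be an admissible T-mesh, let Q ∈ H^d be a cell with Q ⊆ AR_p, and let j be a direction such that the midpoint (inf Q_j + sup Q_j)/2 is an integer. Then the refined mesh subdiv(𝒯, Q, j) is again an admissible T-mesh: for every direction k, the refinement creates no T-junction with pointing direction k or orthogonal direction k inside the k-th frame region FR^(k), and the slices S_k(n) for n ∈ {0,…,⌊(p_k+1)/2⌋} ∪ {N_k−⌊(p_k+1)/2⌋,…,N_k} remain contained in the k-orthogonal skeleton. -/

import Mathlib

open Set

namespace TSpline

/-- A box in `ℝ^d`, given componentwise. -/
abbrev Box (d : ℕ) := Fin d → Set ℝ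

/-- The subset of `ℝ^d` determined by a box. -/
def toSet {d : ℕ} (E : Box d) : Set (Fin d → ℝ) := Set.pi Set.univ E

/-- The closed index domain `cl Ω = ∏ₖ [0, Nₖ]`. -/
def domain {d : ℕ} (N : Fin d → ℕ) : Set (Fin d → ℝ) :=
  Set.pi Set.univ (fun k => Set.Icc (0 : ℝ) (N k))

/-- The boundary `∂Ω` of the index domain. -/
def bdryDomain {d : ℕ} (N : Fin d → ℕ) : Set (Fin d → ℝ) := frontier (domain N)

/-- A component which is an integer singleton `{n}`, `0 ≤ n ≤ Nₖ`. -/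
def IsSingletonComp (Nk : ℕ) (S : Set ℝ) : Prop :=
  ∃ n : ℕ, n ≤ Nk ∧ S = {(n : ℝ)}

/-- A component which is an open interval with integer endpoints in `[0, Nₖ]`. -/
def IsIntervalComp (Nk : ℕ) (S : Set ℝ) : Prop :=
  ∃ a b : ℕ, a < b ∧ b ≤ Nk ∧ S = Set.Ioo (a : ℝ) (b : ℝ)

/-- A mesh entity: every component is an integer singleton or an open integer interval. -/
def IsMeshEntity {d : ℕ} (N : Fin d → ℕ) (E : Box d) : Prop :=
  ∀ k, IsSingletonComp (N k) (E k) ∨ IsIntervalComp (N k) (E k)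

/-- The directions in which an entity has a singleton component. -/
def singDirs {d : ℕ} (E : Box d) : Set (Fin d) := {i | ∃ r : ℝ, E i = {r}}

/-- Split all entities of `M` contained in the region `D` whose `j`-th component is `Q j`
into the three children obtained by bisecting the `j`-th component at `m`. -/
def midSplit {d : ℕ} (M : Set (Box d)) (Q : Box d) (j : Fin d) (m : ℝ) (D : Box d) :
    Set (Box d) :=
  (M \ {E | E ∈ M ∧ (∀ k, E k ⊆ D k) ∧ E j = Q j}) ∪
  ⋃ E ∈ {E | E ∈ M ∧ (∀ k, E k ⊆ D k) ∧ E j = Q j},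
    ({Function.update E j (Set.Ioo (sInf (Q j)) m),
      Function.update E j {m},
      Function.update E j (Set.Ioo m (sSup (Q j)))} : Set (Box d))

/-- One symmetric bisection of a `d`-dimensional cell with integer midpoint. -/
def BisectStep {d : ℕ} (N : Fin d → ℕ) (M M' : Set (Box d)) : Prop :=
  ∃ Q ∈ M, ∃ j : Fin d, ∃ a b mid : ℕ,
    (∀ k, IsIntervalComp (N k) (Q k)) ∧
    Q j = Set.Ioo (a : ℝ) (b : ℝ) ∧ a + b = 2 * mid ∧
    M' = midSplit M Q j (mid : ℝ) (fun k => closure (Q k))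

/-- A tensor-product mesh with integer breakpoints. -/
def IsTensorMesh {d : ℕ} (N : Fin d → ℕ) (M : Set (Box d)) : Prop :=
  ∃ G : Fin d → Finset ℕ,
    (∀ k, 0 ∈ G k ∧ N k ∈ G k ∧ ∀ n ∈ G k, n ≤ N k) ∧
    M = {E | ∀ k, (∃ n ∈ G k, E k = {(n : ℝ)}) ∨
          (∃ a ∈ G k, ∃ b ∈ G k, a < b ∧ (∀ c ∈ G k, c ≤ a ∨ b ≤ c) ∧
            E k = Set.Ioo (a : ℝ) (b : ℝ))}

/-- A T-mesh of the index domain: a finite disjoint partition of `cl Ω` into mesh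
entities, obtained from a tensor-product mesh by repeated symmetric bisections. -/
structure TMesh (d : ℕ) (N : Fin d → ℕ) where
  entities : Set (Box d)
  finite : entities.Finite
  mem_entity : ∀ E ∈ entities, IsMeshEntity N E
  union_eq : (⋃ E ∈ entities, toSet E) = domain N
  pairwise_disjoint : ∀ E ∈ entities, ∀ F ∈ entities, E ≠ F → toSet E ∩ toSet F = ∅
  constructed : ∃ M₀ : Set (Box d), IsTensorMesh N M₀ ∧
    Relation.ReflTransGen (BisectStep N) M₀ entities

variable {d : ℕ} {N : Fin d → ℕ}

/-- `H^k`: the entities with exactly `d - k` singleton components. -/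
def Hdim (T : TMesh d N) (k : ℕ) : Set (Box d) :=
  {E ∈ T.entities | (singDirs E).ncard = d - k}

/-- The `j`-orthogonal skeleton `Sk_j`. -/
def skel (T : TMesh d N) (j : Fin d) : Set (Fin d → ℝ) :=
  ⋃ F ∈ {F ∈ Hdim T (d - 1) | ∃ r : ℝ, F j = {r}}, closure (toSet F)

/-- The valence of a `(d-2)`-dimensional entity: the number of hyperfaces in whose
boundary it lies. -/
noncomputable def valence (T : TMesh d N) (J : Box d) : ℕ :=
  {F ∈ Hdim T (d - 1) | toSet J ⊆ frontier (toSet F)}.ncard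

/-- A T-junction (hanging interface). -/
def IsTJunction (T : TMesh d N) (J : Box d) : Prop :=
  J ∈ Hdim T (d - 2) ∧ ¬ toSet J ⊆ bdryDomain N ∧ valence T J < 4

/-- `TJData T J Q i j`: `Q` is an associated cell of the T-junction `J`, with orthogonal
direction `i` and pointing direction `j`. -/
def TJData (T : TMesh d N) (J Q : Box d) (i j : Fin d) : Prop :=
  Q ∈ Hdim T d ∧ toSet J ⊆ frontier (toSet Q) ∧
  closure (toSet J) ∩ Set.pi Set.univ (fun k => frontier (Q k)) = ∅ ∧
  i ≠ j ∧ (∃ r : ℝ, J i = {r}) ∧ (∃ r : ℝ, J j = {r}) ∧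
  J i ⊆ Q i ∧ J i ≠ Q i ∧ J j ⊆ frontier (Q j)

/-- `⌊(p_k + 1)/2⌋`. -/
def halfdeg (p : Fin d → ℕ) (k : Fin d) : ℕ := (p k + 1) / 2

/-- The active region `AR_p`. -/
def activeRegion (N p : Fin d → ℕ) : Set (Fin d → ℝ) :=
  Set.pi Set.univ (fun k => Set.Icc (halfdeg p k : ℝ) ((N k : ℝ) - (halfdeg p k : ℝ)))

/-- The slice `S_k(n)`. -/
def slice (N : Fin d → ℕ) (k : Fin d) (n : ℕ) : Set (Fin d → ℝ) :=
  {x ∈ domain N | x k = (n : ℝ)}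

/-- The `k`-th frame region `FR^(k)`. -/
def frameRegion (N p : Fin d → ℕ) (k : Fin d) : Set (Fin d → ℝ) :=
  {x ∈ domain N | x k ∈ Set.Icc (0 : ℝ) (halfdeg p k : ℝ) ∪
      Set.Icc ((N k : ℝ) - (halfdeg p k : ℝ)) (N k : ℝ)}

/-- Admissibility of a T-mesh. -/
def Admissible (p : Fin d → ℕ) (T : TMesh d N) : Prop :=
  (∀ k : Fin d, ∀ J Q : Box d, ∀ i j : Fin d, IsTJunction T J → TJData T J Q i j →
      (i = k ∨ j = k) → ¬ toSet J ⊆ frameRegion N p k) ∧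
  (∀ k : Fin d, ∀ n : ℕ, (n ≤ halfdeg p k ∨ (N k - halfdeg p k ≤ n ∧ n ≤ N k)) →
      slice N k n ⊆ skel T k)

/-- Anchors of degree `p`. -/
def IsAnchor (p : Fin d → ℕ) (T : TMesh d N) (A : Box d) : Prop :=
  A ∈ T.entities ∧ toSet A ⊆ activeRegion N p ∧
  ∀ j : Fin d, (∃ r : ℝ, A j = {r}) ↔ Odd (p j)

/-- `P_{j,n}(E)`: replace the `j`-th component of `E` by `{n}`. -/
def proj {d : ℕ} (E : Box d) (j : Fin d) (n : ℕ) : Box d :=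
  Function.update E j {(n : ℝ)}

/-- The global knot vector `gv_j(E)` (as a set of integer indices). -/
def gv (T : TMesh d N) (j : Fin d) (E : Box d) : Set ℕ :=
  {n | n ≤ N j ∧ toSet (proj E j n) ⊆ skel T j}

/-- `V` is a block of consecutive entries of `G`. -/
def IsBlockOf (V G : Set ℕ) : Prop :=
  V ⊆ G ∧ V.Finite ∧ ∀ g ∈ G, ∀ a ∈ V, ∀ b ∈ V, a ≤ g → g ≤ b → g ∈ V

/-- Two knot vectors overlap (`⋈`): both occur as blocks of consecutive entries of a
common knot vector. -/
def Overlaps (V₁ V₂ : Set ℕ) : Prop :=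
  ∃ W : Set ℕ, W.Finite ∧ IsBlockOf V₁ W ∧ IsBlockOf V₂ W

/-- The convex hull in `ℝ` of a set of integer indices. -/
def convOf (V : Set ℕ) : Set ℝ := convexHull ℝ ((fun n : ℕ => (n : ℝ)) '' V)

/-- The local knot vector of an anchor `A` in direction `j`: the block of `p_j + 2`
consecutive entries of `gv_j(A)` whose entry of rank `⌊(p_j+1)/2⌋` is `inf A_j`. -/
def IsAnchorKV (T : TMesh d N) (p : Fin d → ℕ) (A : Box d) (j : Fin d) (V : Set ℕ) : Prop :=
  IsBlockOf V (gv T j A) ∧ V.ncard = p j + 2 ∧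
  ∃ a : ℕ, (a : ℝ) = sInf (A j) ∧ a ∈ V ∧ {v ∈ V | v < a}.ncard = halfdeg p j

open Classical in
noncomputable def anchorKV (T : TMesh d N) (p : Fin d → ℕ) (A : Box d) (j : Fin d) :
    Set ℕ :=
  if h : ∃ V, IsAnchorKV T p A j V then h.choose else ∅

/-- The index support of an anchor. -/
noncomputable def suppA (T : TMesh d N) (p : Fin d → ℕ) (A : Box d) : Set (Fin d → ℝ) :=
  Set.pi Set.univ (fun k => convOf (anchorKV T p A k))

/-- The local knot vector of a T-junction `J` (with associated cell `Q`, orthogonal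
direction `i`, pointing direction `j`) in direction `k`. -/
def IsTJKV (T : TMesh d N) (p : Fin d → ℕ) (J Q : Box d) (i j k : Fin d) (V : Set ℕ) :
    Prop :=
  if k = i then ∃ t : ℕ, J i = {(t : ℝ)} ∧ V = {t}
  else if k = j then
    IsBlockOf V (gv T j J) ∧ V.ncard = p j + 1 ∧
    ((Even (p j) ∧ ∃ t : ℕ, J j = {(t : ℝ)} ∧ t ∈ V ∧ {v ∈ V | v < t}.ncard = p j / 2) ∨
     (Odd (p j) ∧ ∃ a b : ℕ, (a : ℝ) = sInf (Q j) ∧ (b : ℝ) = sSup (Q j) ∧ a ∈ V ∧ b ∈ V ∧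
        {v ∈ V | v < a}.ncard = p j / 2 ∧ {v ∈ V | v < b}.ncard = p j / 2 + 1))
  else
    IsBlockOf V (gv T k J) ∧ V.ncard = p k + 2 + p k % 2 ∧
    ∃ a b : ℕ, a ∈ V ∧ b ∈ V ∧ J k = Set.Ioo (a : ℝ) (b : ℝ) ∧
      {v ∈ V | v < a}.ncard = (p k + 1) / 2 ∧ {v ∈ V | v < b}.ncard = (p k + 1) / 2 + 1

/-- Local knot vector of a T-junction, quantifying over the (unique) associated data. -/
def IsTJKVFull (T : TMesh d N) (p : Fin d → ℕ) (J : Box d) (k : Fin d) (V : Set ℕ) :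
    Prop :=
  ∃ Q : Box d, ∃ i j : Fin d, TJData T J Q i j ∧ IsTJKV T p J Q i j k V

open Classical in
noncomputable def tjKV (T : TMesh d N) (p : Fin d → ℕ) (J : Box d) (k : Fin d) : Set ℕ :=
  if h : ∃ V, IsTJKVFull T p J k V then h.choose else ∅

/-- The geometric T-junction extension `GTJ(J)`. -/
noncomputable def GTJ (T : TMesh d N) (p : Fin d → ℕ) (J : Box d) : Set (Fin d → ℝ) :=
  Set.pi Set.univ (fun k => convOf (tjKV T p J k))

/-- `J` is a T-junction with orthogonal direction `i` and pointing direction `j`. -/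
def HasDirs (T : TMesh d N) (J : Box d) (i j : Fin d) : Prop :=
  IsTJunction T J ∧ ∃ Q : Box d, TJData T J Q i j

/-- Strong geometric analysis-suitability. -/
def SGAS (T : TMesh d N) (p : Fin d → ℕ) : Prop :=
  ∀ J₁ J₂ : Box d, ∀ i₁ j₁ i₂ j₂ : Fin d,
    HasDirs T J₁ i₁ j₁ → HasDirs T J₂ i₂ j₂ → i₁ ≠ i₂ →
    GTJ T p J₁ ∩ GTJ T p J₂ = ∅

/-- Weak geometric analysis-suitability. -/
def WGAS (T : TMesh d N) (p : Fin d → ℕ) : Prop :=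
  ∀ J₁ J₂ : Box d, ∀ i₁ j₁ i₂ j₂ : Fin d,
    HasDirs T J₁ i₁ j₁ → HasDirs T J₂ i₂ j₂ → i₁ ≠ i₂ → j₁ ≠ j₂ →
    GTJ T p J₁ ∩ GTJ T p J₂ = ∅

/-- The abstract T-junction extension `ATJ_j(n)`. -/
noncomputable def ATJ (T : TMesh d N) (p : Fin d → ℕ) (j : Fin d) (n : ℕ) :
    Set (Fin d → ℝ) :=
  slice N j n ∩
  (⋃ A ∈ {A : Box d | IsAnchor p T A ∧ n ∈ gv T j A}, suppA T p A) ∩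
  (⋃ A ∈ {A : Box d | IsAnchor p T A ∧ n ∉ gv T j A}, suppA T p A)

/-- `ATJ_j = ⋃ₙ ATJ_j(n)`. -/
noncomputable def ATJfull (T : TMesh d N) (p : Fin d → ℕ) (j : Fin d) :
    Set (Fin d → ℝ) :=
  ⋃ n ∈ Set.Iic (N j), ATJ T p j n

/-- Abstract analysis-suitability. -/
def AAS (T : TMesh d N) (p : Fin d → ℕ) : Prop :=
  ∀ i j : Fin d, i ≠ j → ∀ n m : ℕ, n ≤ N i → m ≤ N j →
    ATJ T p i n ∩ ATJ T p j m = ∅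

/-- Two anchors weakly partially overlap. -/
def WeakPartOverlap (T : TMesh d N) (p : Fin d → ℕ) (A₁ A₂ : Box d) : Prop :=
  ∃ ℓ : Fin d, anchorKV T p A₁ ℓ ≠ anchorKV T p A₂ ℓ ∧
    Overlaps (anchorKV T p A₁ ℓ) (anchorKV T p A₂ ℓ)

/-- Two anchors strongly partially overlap. -/
def StrongPartOverlap (T : TMesh d N) (p : Fin d → ℕ) (A₁ A₂ : Box d) : Prop :=
  suppA T p A₁ ∩ suppA T p A₂ = ∅ ∨
  d - 1 ≤ {k : Fin d | Overlaps (anchorKV T p A₁ k) (anchorKV T p A₂ k)}.ncard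

/-- Weak dual-compatibility. -/
def WDC (T : TMesh d N) (p : Fin d → ℕ) : Prop :=
  ∀ A₁ A₂ : Box d, IsAnchor p T A₁ → IsAnchor p T A₂ → A₁ ≠ A₂ →
    WeakPartOverlap T p A₁ A₂

/-- Strong dual-compatibility. -/
def SDC (T : TMesh d N) (p : Fin d → ℕ) : Prop :=
  ∀ A₁ A₂ : Box d, IsAnchor p T A₁ → IsAnchor p T A₂ → A₁ ≠ A₂ →
    StrongPartOverlap T p A₁ A₂

/-- `Q'` is a neighboring cell of `Q` in direction `ℓ`. -/
def NeighborInDir (T : TMesh d N) (Q Q' : Box d) (ℓ : Fin d) : Prop :=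
  Q' ∈ Hdim T d ∧ Q' ≠ Q ∧
  (sSup (Q ℓ) = sInf (Q' ℓ) ∨ sSup (Q' ℓ) = sInf (Q ℓ)) ∧
  ∀ k : Fin d, k ≠ ℓ → (Q k ∩ Q' k).Nonempty

/-- Assumption A: every cell has neighbor cells in the active region in at least three
pairwise distinct directions. -/
def AssumptionA (T : TMesh d N) (p : Fin d → ℕ) : Prop :=
  ∀ Q ∈ Hdim T d, ∃ l₁ l₂ l₃ : Fin d, l₁ ≠ l₂ ∧ l₁ ≠ l₃ ∧ l₂ ≠ l₃ ∧
    ∀ l ∈ ({l₁, l₂, l₃} : Set (Fin d)),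
      ∃ Q' : Box d, NeighborInDir T Q Q' l ∧ toSet Q' ⊆ activeRegion N p

/-- The extended region `D` of Algorithm `subdiv`. -/
def extendD (N p : Fin d → ℕ) (Q : Box d) (j : Fin d) : Box d := fun ℓ =>
  closure (Q ℓ) ∪
  {x : ℝ | ℓ ≠ j ∧ sInf (Q ℓ) = (halfdeg p ℓ : ℝ) ∧
      x ∈ Set.Icc (0 : ℝ) (halfdeg p ℓ : ℝ)} ∪
  {x : ℝ | ℓ ≠ j ∧ sSup (Q ℓ) = (N ℓ : ℝ) - (halfdeg p ℓ : ℝ) ∧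
      x ∈ Set.Icc ((N ℓ : ℝ) - (halfdeg p ℓ : ℝ)) (N ℓ : ℝ)}

/-- The entity set produced by Algorithm `subdiv(𝒯, Q, j)`. -/
def subdivEntities (N p : Fin d → ℕ) (M : Set (Box d)) (Q : Box d) (j : Fin d) :
    Set (Box d) :=
  midSplit M Q j ((sInf (Q j) + sSup (Q j)) / 2) (extendD N p Q j)

open Classical in
/-- The componentwise minimal bounding box `M(E,F)`. -/
noncomputable def MBox {d : ℕ} (E F : Box d) : Box d := fun ℓ =>
  if (E ℓ ∩ F ℓ).Nonempty then E ℓ ∩ F ℓ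
  else if sSup (E ℓ) ≤ sInf (F ℓ) then Set.Icc (sSup (E ℓ)) (sInf (F ℓ))
  else Set.Icc (sSup (F ℓ)) (sInf (E ℓ))

/-- `V` is the local knot vector of `E` (an anchor or a T-junction) in direction `j`. -/
def IsLocalKVOf (T : TMesh d N) (p : Fin d → ℕ) (E : Box d) (j : Fin d) (V : Set ℕ) :
    Prop :=
  (IsAnchor p T E ∧ IsAnchorKV T p E j V) ∨
  (IsTJunction T E ∧ IsTJKVFull T p E j V)

end TSpline

/-!
Encode every mesh entity by its closure, a box with integer corners. Repeated bisection makes the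
components of the entities dyadic, so that an entity meeting a closed cell lies in it, and
admissibility becomes a statement about cells: the slices of the frame regions lie in the
skeletons, and two cells abutting on such a slice share a full hyperface, since otherwise the
smaller hyperface carries a T-junction.

This conformity carries a cell across the frame without changing its other components, back and
forth between the active region and the domain boundary. Hence the extended region `D` of `Q` is
a union of cells which all have the same `j`-th component as `Q`, and `subdiv` amounts to
bisecting these cells one by one. The skeletons only grow. The midpoint is not a frame index,
and for `k ≠ j` the ends of `D_k` are either domain boundary or outside the frame, so two
conforming cells abutting on a frame slice lie both inside `D` or both outside, and conformity
survives.
-/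

namespace TSpline

/-! ### Boxes with integer corners -/

/-- A closed box of `ℝ^d` with corners in `ℕ^d`, possibly degenerate in some directions. It encodes
the mesh entity `box B` whose closure it is, so `B ≤ C` says that `box B` lies in the closure of
`box C`. -/
abbrev IntBox (d : ℕ) := Fin d → NonemptyInterval ℕ

/-- The component of a mesh entity with closure `I`: a singleton if `I` is degenerate, and an open
interval otherwise. -/
def component (I : NonemptyInterval ℕ) : Set ℝ :=
  if I.fst = I.snd then {(I.fst : ℝ)} else Ioo (I.fst : ℝ) (I.snd : ℝ)

/-- The mesh entity with closure `B`. -/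
def box {d : ℕ} (B : IntBox d) : Box d := fun k => component (B k)

/-- The box `B` encodes a `d`-dimensional cell. -/
def IsCell {d : ℕ} (B : IntBox d) : Prop := ∀ k, (B k).fst < (B k).snd

/-- The interiors of two intervals intersect. -/
def Overlap (I J : NonemptyInterval ℕ) : Prop := I.fst < J.snd ∧ J.fst < I.snd

/-- The component with closure `I` intersects the closed interval `J`. -/
def Meets (I J : NonemptyInterval ℕ) : Prop :=
  I.fst ≤ J.snd ∧ J.fst ≤ I.snd ∧ (I.fst < I.snd → Overlap I J)

theorem Overlap.symm {I J : NonemptyInterval ℕ} (h : Overlap I J) : Overlap J I := And.symm h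

theorem Overlap.mono {I I' J J' : NonemptyInterval ℕ} (h : Overlap I J) (hI : I ≤ I')
    (hJ : J ≤ J') : Overlap I' J' :=
  ⟨hI.1.trans_lt (h.1.trans_le hJ.2), hJ.1.trans_lt (h.2.trans_le hI.2)⟩

theorem Overlap.meets {I J : NonemptyInterval ℕ} (h : Overlap I J) : Meets I J :=
  ⟨h.1.le, h.2.le, fun _ => h⟩

theorem overlap_self {I : NonemptyInterval ℕ} (h : I.fst < I.snd) : Overlap I I := ⟨h, h⟩

section Component

variable {I J : NonemptyInterval ℕ}

theorem component_of_eq (h : I.fst = I.snd) : component I = {(I.fst : ℝ)} := if_pos h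

theorem component_of_lt (h : I.fst < I.snd) : component I = Ioo (I.fst : ℝ) I.snd := if_neg h.ne

theorem component_mk_of_lt {a b : ℕ} (h : a < b) :
    component ⟨(a, b), h.le⟩ = Ioo (a : ℝ) b := component_of_lt h

theorem component_pure (n : ℕ) : component (.pure n) = {(n : ℝ)} := component_of_eq rfl

theorem mem_component {x : ℝ} : x ∈ component I ↔
    (I.fst : ℝ) ≤ x ∧ x ≤ I.snd ∧ (I.fst < I.snd → (I.fst : ℝ) < x ∧ x < I.snd) := by
  rcases I.fst_le_snd.eq_or_lt with h | h
  · simp [component_of_eq h, ← h, le_antisymm_iff, and_comm]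
  · simp only [component_of_lt h, mem_Ioo, h, true_imp_iff]
    exact ⟨fun hx => ⟨hx.1.le, hx.2.le, hx⟩, fun hx => hx.2.2⟩

theorem closure_component (I : NonemptyInterval ℕ) :
    closure (component I) = Icc (I.fst : ℝ) I.snd := by
  rcases I.fst_le_snd.eq_or_lt with h | h
  · simp [component_of_eq h, ← h]
  · rw [component_of_lt h, closure_Ioo (by exact_mod_cast h.ne)]

theorem component_subset_Icc_iff : component I ⊆ Icc (J.fst : ℝ) J.snd ↔ I ≤ J := by
  rw [← isClosed_Icc.closure_subset_iff, closure_component,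
    Icc_subset_Icc_iff (by exact_mod_cast I.fst_le_snd), Nat.cast_le, Nat.cast_le]
  rfl

theorem component_subset_Icc (h : I ≤ J) : component I ⊆ Icc (J.fst : ℝ) J.snd :=
  component_subset_Icc_iff.2 h

theorem component_injective : Function.Injective component := fun _ _ h =>
  le_antisymm (component_subset_Icc_iff.1 (h ▸ component_subset_Icc le_rfl))
    (component_subset_Icc_iff.1 (h ▸ component_subset_Icc le_rfl))

theorem component_nonempty (I : NonemptyInterval ℕ) : (component I).Nonempty := by
  rw [← closure_nonempty_iff, closure_component]
  exact nonempty_Icc.2 (by exact_mod_cast I.fst_le_snd)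

theorem exists_component_eq_singleton_iff : (∃ r : ℝ, component I = {r}) ↔ I.fst = I.snd := by
  refine ⟨fun ⟨r, hr⟩ => ?_, fun h => ⟨_, component_of_eq h⟩⟩
  have h := closure_component I
  rw [hr, closure_singleton, eq_comm, Icc_eq_singleton_iff] at h
  exact_mod_cast h.1.trans h.2.symm

theorem component_subset_component (h : I ≤ J) (hIJ : I.fst = I.snd → J.fst = J.snd) :
    component I ⊆ component J := by
  have h' := NonemptyInterval.le_def.1 h
  rcases I.fst_le_snd.eq_or_lt with hI | hI
  · rw [component_of_eq hI, component_of_eq (hIJ hI), show I.fst = J.fst by have := hIJ hI; omega]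
  · rw [component_of_lt hI, component_of_lt (by omega)]
    exact Ioo_subset_Ioo (by exact_mod_cast h.1) (by exact_mod_cast h.2)

theorem meets_of_mem {x : ℝ} (hI : x ∈ component I) (hJ : x ∈ Icc (J.fst : ℝ) J.snd) :
    Meets I J := by
  obtain ⟨h₁, h₂, h₃⟩ := mem_component.1 hI
  refine ⟨by exact_mod_cast h₁.trans hJ.2, by exact_mod_cast hJ.1.trans h₂, fun h => ⟨?_, ?_⟩⟩
  · exact_mod_cast (h₃ h).1.trans_le hJ.2
  · exact_mod_cast hJ.1.trans_lt (h₃ h).2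

theorem natCast_add_half_mem_Icc {n : ℕ} :
    (n + 1 / 2 : ℝ) ∈ Icc (I.fst : ℝ) I.snd ↔ I.fst ≤ n ∧ n < I.snd := by
  constructor
  · rintro ⟨h₁, h₂⟩
    have h₁' : (I.fst : ℝ) < n + 1 := by linarith
    have h₂' : (n : ℝ) < I.snd := by linarith
    exact ⟨Nat.lt_succ_iff.1 (by exact_mod_cast h₁'), by exact_mod_cast h₂'⟩
  · rintro ⟨h₁, h₂⟩
    have h₁' : (I.fst : ℝ) ≤ n := by exact_mod_cast h₁
    have h₂' : (n : ℝ) + 1 ≤ I.snd := by exact_mod_cast h₂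
    constructor <;> linarith

theorem natCast_add_half_mem_component {n : ℕ} :
    (n + 1 / 2 : ℝ) ∈ component I ↔ I.fst ≤ n ∧ n < I.snd := by
  refine ⟨fun h => natCast_add_half_mem_Icc.1 (component_subset_Icc le_rfl h), fun h => ?_⟩
  have h₁ : (I.fst : ℝ) ≤ n := by exact_mod_cast h.1
  have h₂ : (n : ℝ) + 1 ≤ I.snd := by exact_mod_cast h.2
  rw [component_of_lt (h.1.trans_lt h.2)]
  constructor <;> linarith

end Component

section Box

variable {d : ℕ} {N : Fin d → ℕ} {B C : IntBox d} {x : Fin d → ℝ}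

theorem box_injective : Function.Injective (box : IntBox d → Box d) := fun _ _ h =>
  funext fun k => component_injective (congrFun h k)

theorem mem_toSet_box : x ∈ toSet (box B) ↔ ∀ k, x k ∈ component (B k) := by
  simp [toSet, box]

theorem toSet_box_nonempty (B : IntBox d) : (toSet (box B)).Nonempty :=
  univ_pi_nonempty_iff.2 fun k => component_nonempty (B k)

theorem toSet_box_subset_pi_iff {s : Fin d → Set ℝ} :
    toSet (box B) ⊆ pi univ s ↔ ∀ k, component (B k) ⊆ s k := by
  rw [toSet, univ_pi_subset_univ_pi_iff]
  exact or_iff_left fun ⟨k, hk⟩ => (component_nonempty (B k)).ne_empty hk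

theorem mem_closure_toSet_box :
    x ∈ closure (toSet (box B)) ↔ ∀ k, x k ∈ Icc ((B k).fst : ℝ) (B k).snd := by
  simp only [toSet, closure_pi_set, mem_pi, mem_univ, true_imp_iff, box, closure_component]

theorem toSet_box_subset_closure_iff : toSet (box B) ⊆ closure (toSet (box C)) ↔ B ≤ C := by
  have h : closure (toSet (box C)) = pi univ fun k => Icc ((C k).fst : ℝ) (C k).snd :=
    Set.ext fun _ => mem_closure_toSet_box.trans mem_univ_pi.symm
  rw [h, toSet_box_subset_pi_iff]
  exact forall_congr' fun k => component_subset_Icc_iff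

theorem isIntervalComp_component_iff {n : ℕ} {I : NonemptyInterval ℕ} :
    IsIntervalComp n (component I) ↔ I.fst < I.snd ∧ I.snd ≤ n := by
  refine ⟨?_, fun h => ⟨I.fst, I.snd, h.1, h.2, component_of_lt h.1⟩⟩
  rintro ⟨a, b, hab, hb, h⟩
  obtain rfl : I = ⟨(a, b), hab.le⟩ := component_injective (h.trans (component_mk_of_lt hab).symm)
  exact ⟨hab, hb⟩

theorem isMeshEntity_iff {E : Box d} :
    IsMeshEntity N E ↔ ∃ B : IntBox d, (∀ k, (B k).snd ≤ N k) ∧ box B = E := by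
  constructor
  · intro h
    have : ∀ k, ∃ I : NonemptyInterval ℕ, I.snd ≤ N k ∧ component I = E k := fun k => by
      rcases h k with ⟨n, hn, hE⟩ | ⟨a, b, hab, hb, hE⟩
      · exact ⟨.pure n, hn, (component_pure n).trans hE.symm⟩
      · exact ⟨⟨(a, b), hab.le⟩, hb, (component_mk_of_lt hab).trans hE.symm⟩
    choose B hB hE using this
    exact ⟨B, hB, funext hE⟩
  · rintro ⟨B, hB, rfl⟩ k
    rcases (B k).fst_le_snd.eq_or_lt with h | h
    · exact .inl ⟨(B k).fst, h ▸ hB k, component_of_eq h⟩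
    · exact .inr (isIntervalComp_component_iff.2 ⟨h, hB k⟩)

theorem singDirs_box (B : IntBox d) : singDirs (box B) = {k | (B k).fst = (B k).snd} :=
  Set.ext fun _ => exists_component_eq_singleton_iff

end Box

/-! ### Splitting -/

section Split

/-- The midpoint of the nondegenerate interval `I` is the integer `m`. -/
def IsMidpoint (I : NonemptyInterval ℕ) (m : ℕ) : Prop := I.fst < I.snd ∧ I.fst + I.snd = 2 * m

/-- `J` is the closure of one of the three components into which `m` divides the interior of `I`. -/
def IsPiece (I : NonemptyInterval ℕ) (m : ℕ) (J : NonemptyInterval ℕ) : Prop :=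
  (J.fst = I.fst ∧ J.snd = m) ∨ (J.fst = m ∧ J.snd = m) ∨ (J.fst = m ∧ J.snd = I.snd)

/-- The mesh obtained from `S` by dividing at `m` the `j`-th component of all boxes in `U` whose
`j`-th component is `I`. Both a bisection of a cell and Algorithm `subdiv` are of this form, with
`U` the boxes inside the cell and inside the extended region, respectively. -/
def split {d : ℕ} (S : Set (IntBox d)) (j : Fin d) (I : NonemptyInterval ℕ) (m : ℕ)
    (U : Set (IntBox d)) : Set (IntBox d) :=
  {B | B ∈ S ∧ ¬(B ∈ U ∧ B j = I)} ∪
    {B | ∃ B₀ ∈ S, (B₀ ∈ U ∧ B₀ j = I) ∧ ∃ J, IsPiece I m J ∧ B = Function.update B₀ j J}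

variable {d : ℕ} {S U V : Set (IntBox d)} {E F Q : IntBox d} {I J : NonemptyInterval ℕ} {j : Fin d}
  {m : ℕ} {x : Fin d → ℝ}

theorem IsMidpoint.lt (h : IsMidpoint I m) : I.fst < m ∧ m < I.snd := by
  have h₁ := h.1
  have h₂ := h.2
  omega

theorem isMidpoint_of_component_eq {a b : ℕ} (h : component I = Ioo (a : ℝ) b)
    (hab : a + b = 2 * m) : IsMidpoint I m := by
  have hlt : a < b := Nat.cast_lt.1 (nonempty_Ioo.1 (h ▸ component_nonempty I))
  obtain rfl : I = ⟨(a, b), hlt.le⟩ := component_injective (h.trans (component_mk_of_lt hlt).symm)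
  exact ⟨hlt, hab⟩

theorem IsPiece.le (hJ : IsPiece I m J) (hm : IsMidpoint I m) : J ≤ I := by
  have h := hm.lt
  rw [NonemptyInterval.le_def]
  unfold IsPiece at hJ
  omega

theorem IsPiece.component_subset (hJ : IsPiece I m J) (hm : IsMidpoint I m) :
    component J ⊆ component I := by
  obtain ⟨h₁, h₂⟩ := hm.lt
  have h₁' : (I.fst : ℝ) < m := by exact_mod_cast h₁
  have h₂' : (m : ℝ) < I.snd := by exact_mod_cast h₂
  rw [component_of_lt hm.1]
  rcases hJ with ⟨h, h'⟩ | ⟨h, h'⟩ | ⟨h, h'⟩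
  · rw [component_of_lt (by omega), h, h']
    exact Ioo_subset_Ioo le_rfl h₂'.le
  · rw [component_of_eq (h.trans h'.symm), h]
    exact singleton_subset_iff.2 ⟨h₁', h₂'⟩
  · rw [component_of_lt (by omega), h, h']
    exact Ioo_subset_Ioo h₁'.le le_rfl

theorem IsPiece.ne (hJ : IsPiece I m J) (hm : IsMidpoint I m) : J ≠ I := by
  rintro rfl
  have h := hm.lt
  unfold IsPiece at hJ
  omega

theorem exists_isPiece_mem {t : ℝ} (hm : IsMidpoint I m) (ht : t ∈ component I) :
    ∃ J, IsPiece I m J ∧ t ∈ component J := by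
  obtain ⟨h₁, h₂⟩ := hm.lt
  rw [component_of_lt hm.1] at ht
  rcases lt_trichotomy t m with h | rfl | h
  · exact ⟨⟨(I.fst, m), h₁.le⟩, .inl ⟨rfl, rfl⟩, component_mk_of_lt h₁ ▸ ⟨ht.1, h⟩⟩
  · exact ⟨.pure m, .inr (.inl ⟨rfl, rfl⟩), component_pure m ▸ mem_singleton _⟩
  · exact ⟨⟨(m, I.snd), h₂.le⟩, .inr (.inr ⟨rfl, rfl⟩), component_mk_of_lt h₂ ▸ ⟨h, ht.2⟩⟩

theorem IsPiece.eq_of_meets {K : NonemptyInterval ℕ} (hJ : IsPiece I m J) (hK : IsPiece I m K)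
    (hm : IsMidpoint I m) (hJK : Meets J K) (hKJ : Meets K J) : J = K := by
  have h := hm.lt
  apply NonemptyInterval.toProd_injective
  unfold IsPiece at hJ hK
  unfold Meets Overlap at hJK hKJ
  ext <;> omega

theorem exists_parent (hm : IsMidpoint I m) (hE : E ∈ split S j I m U) :
    ∃ E₀ ∈ S, E ≤ E₀ ∧ (∀ k ≠ j, E k = E₀ k) ∧
      ((E = E₀ ∧ ¬(E₀ ∈ U ∧ E₀ j = I)) ∨ (E₀ ∈ U ∧ E₀ j = I ∧ IsPiece I m (E j))) := by
  rcases hE with ⟨hE, hn⟩ | ⟨E₀, hE₀, ⟨hU, rfl⟩, J, hJ, rfl⟩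
  · exact ⟨E, hE, le_rfl, fun _ _ => rfl, .inl ⟨rfl, hn⟩⟩
  · exact ⟨E₀, hE₀, update_le_self_iff.2 (hJ.le hm),
      fun k hk => Function.update_of_ne hk _ _, .inr ⟨hU, rfl, by simpa using hJ⟩⟩

theorem exists_parent_mem (hm : IsMidpoint I m) (hE : E ∈ split S j I m U)
    (hx : x ∈ toSet (box E)) : ∃ E₀ ∈ S, x ∈ toSet (box E₀) ∧ (∀ k ≠ j, E k = E₀ k) ∧
      ((E = E₀ ∧ ¬(E₀ ∈ U ∧ E₀ j = I)) ∨ (E₀ ∈ U ∧ E₀ j = I ∧ IsPiece I m (E j))) := by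
  obtain ⟨E₀, hE₀, -, hoff, hor⟩ := exists_parent hm hE
  refine ⟨E₀, hE₀, ?_, hoff, hor⟩
  rw [mem_toSet_box] at hx ⊢
  intro k
  rcases eq_or_ne k j with rfl | hk
  · rcases hor with ⟨rfl, -⟩ | ⟨-, rfl, hJ⟩
    · exact hx k
    · exact hJ.component_subset hm (hx k)
  · exact hoff k hk ▸ hx k

theorem exists_mem_split_iff (hm : IsMidpoint I m) :
    (∃ E ∈ split S j I m U, x ∈ toSet (box E)) ↔ ∃ E ∈ S, x ∈ toSet (box E) := by
  constructor
  · rintro ⟨E, hE, hx⟩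
    obtain ⟨E₀, hE₀, hx₀, -⟩ := exists_parent_mem hm hE hx
    exact ⟨E₀, hE₀, hx₀⟩
  · rintro ⟨E, hE, hx⟩
    by_cases hsel : E ∈ U ∧ E j = I
    · obtain ⟨J, hJ, hxJ⟩ := exists_isPiece_mem hm (hsel.2 ▸ mem_toSet_box.1 hx j)
      refine ⟨_, .inr ⟨E, hE, hsel, J, hJ, rfl⟩, mem_toSet_box.2 ?_⟩
      exact (Function.forall_update_iff E fun k K => x k ∈ component K).2
        ⟨hxJ, fun k _ => mem_toSet_box.1 hx k⟩
    · exact ⟨E, .inl ⟨hE, hsel⟩, hx⟩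

theorem eq_of_mem_split (hm : IsMidpoint I m)
    (hS : ∀ E ∈ S, ∀ F ∈ S, x ∈ toSet (box E) → x ∈ toSet (box F) → E = F)
    (hE : E ∈ split S j I m U) (hF : F ∈ split S j I m U) (hxE : x ∈ toSet (box E))
    (hxF : x ∈ toSet (box F)) : E = F := by
  obtain ⟨E₀, hE₀, hxE₀, hoffE, horE⟩ := exists_parent_mem hm hE hxE
  obtain ⟨F₀, hF₀, hxF₀, hoffF, horF⟩ := exists_parent_mem hm hF hxF
  obtain rfl := hS E₀ hE₀ F₀ hF₀ hxE₀ hxF₀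
  rcases horE with ⟨rfl, hE'⟩ | ⟨hU, hI, hJ⟩ <;> rcases horF with ⟨rfl, hF'⟩ | ⟨hU', hI', hK⟩
  · rfl
  · exact absurd ⟨hU', hI'⟩ hE'
  · exact absurd ⟨hU, hI⟩ hF'
  · funext k
    rcases eq_or_ne k j with rfl | hk
    · have hxE := mem_toSet_box.1 hxE k
      have hxF := mem_toSet_box.1 hxF k
      exact hJ.eq_of_meets hK hm (meets_of_mem hxE (component_subset_Icc le_rfl hxF))
        (meets_of_mem hxF (component_subset_Icc le_rfl hxE))
    · rw [hoffE k hk, hoffF k hk]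

theorem split_empty : split S j I m ∅ = S := by
  simp [split]

theorem split_split (hm : IsMidpoint I m) :
    split (split S j I m U) j I m V = split S j I m (U ∪ V) := by
  ext B
  constructor
  · rintro (⟨⟨hB, _⟩ | hB, hV⟩ | ⟨B₀, ⟨hB, _⟩ | ⟨B₁, -, -, J, hJ, rfl⟩, ⟨hV, hI⟩, hJ'⟩)
    · exact .inl ⟨hB, by simp only [mem_union]; tauto⟩
    · obtain ⟨B₀, hB₀, ⟨hU, hI⟩, hJ⟩ := hB
      exact .inr ⟨B₀, hB₀, ⟨.inl hU, hI⟩, hJ⟩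
    · exact .inr ⟨B₀, hB, ⟨.inr hV, hI⟩, hJ'⟩
    · exact absurd (by simpa using hI) (hJ.ne hm)
  · rintro (⟨hB, hUV⟩ | ⟨B₀, hB₀, ⟨hUV, hI⟩, J, hJ, rfl⟩)
    · simp only [mem_union] at hUV
      exact .inl ⟨.inl ⟨hB, by tauto⟩, by tauto⟩
    · by_cases hU : B₀ ∈ U
      · exact .inl ⟨.inr ⟨B₀, hB₀, ⟨hU, hI⟩, J, hJ, rfl⟩, fun h => hJ.ne hm (by simpa using h.2)⟩
      · exact .inr ⟨B₀, .inl ⟨hB₀, fun h => hU h.1⟩, ⟨hUV.resolve_left hU, hI⟩, J, hJ, rfl⟩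

theorem split_congr (h : ∀ B ∈ S, B ∈ U ↔ B ∈ V) : split S j I m U = split S j I m V := by
  have hsel : ∀ B ∈ S, (B ∈ U ∧ B j = I ↔ B ∈ V ∧ B j = I) := fun B hB =>
    and_congr_left' (h B hB)
  ext B
  refine or_congr (and_congr_right fun hB => not_congr (hsel B hB)) ?_
  exact exists_congr fun B₀ => and_congr_right fun hB₀ => and_congr_left' (hsel B₀ hB₀)

theorem box_update (B : IntBox d) (j : Fin d) (J : NonemptyInterval ℕ) :
    box (Function.update B j J) = Function.update (box B) j (component J) :=
  Function.comp_update component B j J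

theorem children_box (hm : IsMidpoint I m) (B : IntBox d) :
    ({Function.update (box B) j (Ioo (I.fst : ℝ) m), Function.update (box B) j {(m : ℝ)},
      Function.update (box B) j (Ioo (m : ℝ) I.snd)} : Set (Box d)) =
      {E | ∃ J, IsPiece I m J ∧ E = box (Function.update B j J)} := by
  obtain ⟨h₁, h₂⟩ := hm.lt
  ext E
  simp only [box_update, mem_insert_iff, mem_singleton_iff, mem_ofPred_eq]
  constructor
  · rintro (rfl | rfl | rfl)
    · exact ⟨⟨(_, m), h₁.le⟩, .inl ⟨rfl, rfl⟩, by rw [component_mk_of_lt h₁]⟩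
    · exact ⟨.pure m, .inr (.inl ⟨rfl, rfl⟩), by rw [component_pure]⟩
    · exact ⟨⟨(m, _), h₂.le⟩, .inr (.inr ⟨rfl, rfl⟩), by rw [component_mk_of_lt h₂]⟩
  · rintro ⟨J, ⟨h, h'⟩ | ⟨h, h'⟩ | ⟨h, h'⟩, rfl⟩
    · exact .inl (by rw [component_of_lt (by omega), h, h'])
    · exact .inr (.inl (by rw [component_of_eq (h.trans h'.symm), h]))
    · exact .inr (.inr (by rw [component_of_lt (by omega), h, h']))

theorem midSplit_box (hm : IsMidpoint (Q j) m) (D : IntBox d) :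
    midSplit (box '' S) (box Q) j m (fun k => Icc ((D k).fst : ℝ) (D k).snd) =
      box '' split S j (Q j) m (Iic D) := by
  have hlt : ((Q j).fst : ℝ) < (Q j).snd := by exact_mod_cast hm.1
  have hinf : sInf (box Q j) = (Q j).fst := by rw [box, component_of_lt hm.1, csInf_Ioo hlt]
  have hsup : sSup (box Q j) = (Q j).snd := by rw [box, component_of_lt hm.1, csSup_Ioo hlt]
  have hsel : {E | E ∈ box '' S ∧ (∀ k, E k ⊆ Icc ((D k).fst : ℝ) (D k).snd) ∧
      E j = box Q j} = box '' {B | B ∈ S ∧ B ∈ Iic D ∧ B j = Q j} := by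
    ext E
    constructor
    · rintro ⟨⟨B, hB, rfl⟩, hD, hQ⟩
      exact ⟨B, ⟨hB, fun k => component_subset_Icc_iff.1 (hD k), component_injective hQ⟩, rfl⟩
    · rintro ⟨B, ⟨hB, hD, hQ⟩, rfl⟩
      exact ⟨⟨B, hB, rfl⟩, fun k => component_subset_Icc (hD k), congrArg component hQ⟩
  rw [midSplit, hsel, hinf, hsup, ← image_sdiff box_injective, biUnion_image, split, image_union]
  congr 1
  · congr 1
    ext B
    simp only [mem_sdiff, mem_ofPred_eq]
    tauto
  · ext E
    simp only [children_box hm, mem_iUnion, exists_prop, mem_image, mem_ofPred_eq]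
    constructor
    · rintro ⟨B, ⟨hB, h⟩, J, hJ, rfl⟩
      exact ⟨_, ⟨B, hB, h, J, hJ, rfl⟩, rfl⟩
    · rintro ⟨_, ⟨B, hB, h, J, hJ, rfl⟩, rfl⟩
      exact ⟨B, ⟨hB, h⟩, J, hJ, rfl⟩

end Split

/-! ### Dyadic intervals -/

/-- `J` is one of the two halves of `I`. -/
def IsHalf (I J : NonemptyInterval ℕ) : Prop :=
  J.fst < J.snd ∧ ((J.fst = I.fst ∧ 2 * J.snd = I.fst + I.snd) ∨
    (J.snd = I.snd ∧ 2 * J.fst = I.fst + I.snd))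

/-- `I` is spanned by two consecutive breakpoints in `G`. -/
def IsGap (G : Finset ℕ) (I : NonemptyInterval ℕ) : Prop :=
  I.fst ∈ G ∧ I.snd ∈ G ∧ I.fst < I.snd ∧ ∀ c ∈ G, c ≤ I.fst ∨ I.snd ≤ c

/-- `I` arises by repeated halving from an interval spanned by consecutive breakpoints in `G`. -/
def IsDyadic (G : Finset ℕ) (I : NonemptyInterval ℕ) : Prop :=
  ∃ R, IsGap G R ∧ Relation.ReflTransGen IsHalf R I

section IsDyadic

variable {G : Finset ℕ} {I J R : NonemptyInterval ℕ} {m n t : ℕ}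

theorem IsHalf.le (h : IsHalf I J) : J ≤ I := by
  unfold IsHalf at h
  rw [NonemptyInterval.le_def]
  omega

theorem le_of_reflTransGen_isHalf (h : Relation.ReflTransGen IsHalf I J) : J ≤ I := by
  induction h with
  | refl => exact le_rfl
  | tail _ hJ ih => exact hJ.le.trans ih

theorem half_of_reflTransGen_isHalf (hI : Relation.ReflTransGen IsHalf R I)
    (hJ : Relation.ReflTransGen IsHalf R J) (hlt : J.fst < J.snd) (hle : J ≤ I) (hne : J ≠ I) :
    2 * J.snd ≤ I.fst + I.snd ∨ I.fst + I.snd ≤ 2 * J.fst := by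
  induction hI using Relation.ReflTransGen.head_induction_on with
  | refl =>
    obtain rfl | ⟨H, hH, hHJ⟩ := hJ.cases_head
    · exact absurd rfl hne
    · have h := NonemptyInterval.le_def.1 (le_of_reflTransGen_isHalf hHJ)
      unfold IsHalf at hH
      omega
  | @head R H hH hHI ih =>
    have hIH := NonemptyInterval.le_def.1 (le_of_reflTransGen_isHalf hHI)
    have hJI := NonemptyInterval.le_def.1 hle
    obtain rfl | ⟨H', hH', hHJ⟩ := hJ.cases_head
    · unfold IsHalf at hH
      omega
    · by_cases hHH : H' = H
      · exact ih (hHH ▸ hHJ)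
      · have hJH := NonemptyInterval.le_def.1 (le_of_reflTransGen_isHalf hHJ)
        have hne' : ¬(H'.fst = H.fst ∧ H'.snd = H.snd) := fun h =>
          hHH (NonemptyInterval.toProd_injective (Prod.ext h.1 h.2))
        unfold IsHalf at hH hH'
        omega

theorem IsDyadic.half_of_lt (hI : IsDyadic G I) (hJ : IsDyadic G J) (hlt : J.fst < J.snd)
    (h : J < I) : 2 * J.snd ≤ I.fst + I.snd ∨ I.fst + I.snd ≤ 2 * J.fst := by
  obtain ⟨R, ⟨hR₁, hR₂, -, hR⟩, hRI⟩ := hI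
  obtain ⟨R', ⟨hR₁', hR₂', -, hR'⟩, hRJ⟩ := hJ
  have hIR := NonemptyInterval.le_def.1 (le_of_reflTransGen_isHalf hRI)
  have hJR := NonemptyInterval.le_def.1 (le_of_reflTransGen_isHalf hRJ)
  have hJI := NonemptyInterval.le_def.1 h.le
  obtain rfl : R' = R := by
    have h₁ := hR _ hR₁'
    have h₂ := hR _ hR₂'
    have h₃ := hR' _ hR₁
    have h₄ := hR' _ hR₂
    apply NonemptyInterval.toProd_injective
    ext <;> omega
  exact half_of_reflTransGen_isHalf hRI hRJ hlt h.le h.ne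

theorem IsDyadic.piece (hI : IsDyadic G I) (hm : IsMidpoint I m) (hJ : IsPiece I m J)
    (hlt : J.fst < J.snd) : IsDyadic G J := by
  obtain ⟨R, hR, hRI⟩ := hI
  refine ⟨R, hR, hRI.tail ⟨hlt, ?_⟩⟩
  have h := hm.2
  unfold IsPiece at hJ
  omega

theorem exists_isGap (ht : 0 < t) (h0 : 0 ∈ G) (hN : t ∈ G) (hle : ∀ c ∈ G, c ≤ t) (hn : n ∈ G) :
    ∃ I, IsGap G I ∧ (I.fst = n ∨ I.snd = n) := by
  rcases (hle n hn).lt_or_eq with h | rfl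
  · obtain ⟨b, hb, hmin⟩ := (G.filter (n < ·)).exists_min_image id ⟨t, by simp [hN, h]⟩
    simp only [Finset.mem_filter, id] at hb hmin
    refine ⟨⟨(n, b), hb.2.le⟩, ⟨hn, hb.1, hb.2, fun c hc => ?_⟩, .inl rfl⟩
    exact (le_or_gt c n).imp_right fun hc' => hmin c ⟨hc, hc'⟩
  · obtain ⟨a, ha, hmax⟩ := (G.filter (· < n)).exists_max_image id ⟨0, by simp [h0, ht]⟩
    simp only [Finset.mem_filter, id] at ha hmax
    refine ⟨⟨(a, n), ha.2.le⟩, ⟨ha.1, hn, ha.2, fun c hc => ?_⟩, .inr rfl⟩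
    exact (lt_or_ge c n).imp_left fun hc' => hmax c ⟨hc, hc'⟩

end IsDyadic

/-! ### Regular meshes -/

section Regular

/-- The combinatorial properties of the meshes obtained by bisections from the tensor-product mesh
with breakpoints `G`: nondegenerate components are dyadic, an entity meeting a closed cell lies in
it, and every degenerate component is an endpoint of the corresponding component of some cell whose
closure contains the entity. -/
structure Regular {d : ℕ} (G : Fin d → Finset ℕ) (S : Set (IntBox d)) : Prop where
  dyadic : ∀ B ∈ S, ∀ k, (B k).fst < (B k).snd → IsDyadic (G k) (B k)
  le_of_meets : ∀ B ∈ S, ∀ C ∈ S, IsCell C → (∀ k, Meets (B k) (C k)) → B ≤ C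
  exists_cell_endpoint : ∀ B ∈ S, ∀ k, (B k).fst = (B k).snd →
    ∃ C ∈ S, IsCell C ∧ B ≤ C ∧ ((C k).fst = (B k).fst ∨ (C k).snd = (B k).fst)

variable {d : ℕ} {N : Fin d → ℕ} {G : Fin d → Finset ℕ} {S : Set (IntBox d)} {j : Fin d} {m : ℕ}
  {B C E Q : IntBox d}

theorem Regular.eq_of_overlap (hS : Regular G S) (hB : B ∈ S) (hC : C ∈ S) (hBc : IsCell B)
    (hCc : IsCell C) (h : ∀ k, Overlap (B k) (C k)) : B = C :=
  le_antisymm (hS.le_of_meets B hB C hC hCc fun k => (h k).meets)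
    (hS.le_of_meets C hC B hB hBc fun k => (h k).symm.meets)

/-- The tensor-product mesh with breakpoints `G`, in terms of closures. -/
def tensorBoxes {d : ℕ} (G : Fin d → Finset ℕ) : Set (IntBox d) :=
  {B | ∀ k, (∃ n ∈ G k, B k = .pure n) ∨ IsGap (G k) (B k)}

theorem regular_tensorBoxes (hN : ∀ k, 0 < N k)
    (hG : ∀ k, 0 ∈ G k ∧ N k ∈ G k ∧ ∀ n ∈ G k, n ≤ N k) : Regular G (tensorBoxes G) where
  dyadic B hB k hk := by
    rcases hB k with ⟨n, -, hn⟩ | h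
    · simp [hn, NonemptyInterval.pure] at hk
    · exact ⟨_, h, .refl⟩
  le_of_meets B hB C hC hCc h k := by
    have hCk : IsGap (G k) (C k) := (hC k).resolve_left fun ⟨n, _, hn⟩ => by
      have := hCc k
      simp [hn, NonemptyInterval.pure] at this
    have hM := h k
    rw [NonemptyInterval.le_def]
    unfold Meets Overlap at hM
    rcases hB k with ⟨n, hn, hBn⟩ | hBk
    · have := hCk.2.2.2 n hn
      simp only [hBn, NonemptyInterval.pure] at hM ⊢
      omega
    · have := hBk.2.2.1
      have := hBk.2.2.2 _ hCk.1
      have := hBk.2.2.2 _ hCk.2.1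
      have := hCk.2.2.2 _ hBk.1
      have := hCk.2.2.2 _ hBk.2.1
      omega
  exists_cell_endpoint B hB k hk := by
    have hgap : ∀ l, ∃ I, IsGap (G l) I ∧ B l ≤ I ∧
        ((B l).fst = (B l).snd → I.fst = (B l).fst ∨ I.snd = (B l).fst) := fun l => by
      rcases hB l with ⟨n, hn, hBn⟩ | h
      · obtain ⟨I, hI, hIn⟩ := exists_isGap (hN l) (hG l).1 (hG l).2.1 (hG l).2.2 hn
        have hlt := hI.2.2.1
        refine ⟨I, hI, ?_, fun _ => by simpa [hBn, NonemptyInterval.pure] using hIn⟩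
        simp only [hBn, NonemptyInterval.le_def, NonemptyInterval.pure]
        omega
      · exact ⟨_, h, le_rfl, fun h' => absurd h' h.2.2.1.ne⟩
    choose C hC hBC hCB using hgap
    exact ⟨C, fun l => .inr (hC l), fun l => (hC l).2.2.1, hBC, hCB k hk⟩

theorem exists_parent_cell {I : NonemptyInterval ℕ} {U : Set (IntBox d)} (hm : IsMidpoint I m)
    (hC : C ∈ split S j I m U) (hCc : IsCell C) :
    ∃ C₀ ∈ S, IsCell C₀ ∧ C ≤ C₀ ∧ (∀ k ≠ j, C k = C₀ k) ∧
      ((C = C₀ ∧ ¬(C₀ ∈ U ∧ C₀ j = I)) ∨ (C₀ ∈ U ∧ C₀ j = I ∧ IsPiece I m (C j))) := by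
  obtain ⟨C₀, hC₀, hle, h⟩ := exists_parent hm hC
  exact ⟨C₀, hC₀, fun k => (hle k).1.trans_lt ((hCc k).trans_le (hle k).2), hle, h⟩

theorem Regular.le_or_ge_midpoint (hS : Regular G S) (hQ : Q ∈ S) (hm : IsMidpoint (Q j) m)
    (hE : E ∈ split S j (Q j) m (Iic Q)) (hEQ : E ≤ Q) : (E j).snd ≤ m ∨ m ≤ (E j).fst := by
  have h := hm.2
  obtain ⟨E₀, hE₀, -, -, ⟨rfl, hn⟩ | ⟨-, -, hp⟩⟩ := exists_parent hm hE
  · rcases (E j).fst_le_snd.eq_or_lt with hd | hd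
    · omega
    · have hlt : E j < Q j := lt_of_le_of_ne (hEQ j) fun h => hn ⟨hEQ, h⟩
      have := (hS.dyadic Q hQ j hm.1).half_of_lt (hS.dyadic E hE₀ j hd) hd hlt
      omega
  · unfold IsPiece at hp
    omega

theorem isCell_update {I : NonemptyInterval ℕ} (hC : IsCell C) (hI : I.fst < I.snd) :
    IsCell (Function.update C j I) := fun k => by
  rcases eq_or_ne k j with rfl | hk
  · simpa using hI
  · simpa [hk] using hC k

theorem Regular.exists_child (hS : Regular G S) (hQ : Q ∈ S) (hQc : IsCell Q)
    (hm : IsMidpoint (Q j) m) (hE : E ∈ split S j (Q j) m (Iic Q)) (hC : C ∈ S) (hCc : IsCell C)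
    (hEC : E ≤ C) : ∃ I ≤ C j, I.fst < I.snd ∧ E j ≤ I ∧
      Function.update C j I ∈ split S j (Q j) m (Iic Q) := by
  by_cases hsel : C ≤ Q ∧ C j = Q j
  · obtain rfl : C = Q := hS.eq_of_overlap hC hQ hCc hQc fun k =>
      (overlap_self (hCc k)).mono le_rfl (hsel.1 k)
    obtain ⟨h₁, h₂⟩ := hm.lt
    have hnew : ∀ I, IsPiece (C j) m I →
        Function.update C j I ∈ split S j (C j) m (Iic C) := fun I hI =>
      .inr ⟨C, hC, ⟨self_mem_Iic, rfl⟩, I, hI, rfl⟩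
    rcases hS.le_or_ge_midpoint hC hm hE hEC with h | h
    · exact ⟨⟨(_, m), h₁.le⟩, ⟨le_rfl, h₂.le⟩, h₁, ⟨(hEC j).1, h⟩, hnew _ (.inl ⟨rfl, rfl⟩)⟩
    · exact ⟨⟨(m, _), h₂.le⟩, ⟨h₁.le, le_rfl⟩, h₂, ⟨h, (hEC j).2⟩, hnew _ (.inr (.inr ⟨rfl, rfl⟩))⟩
  · exact ⟨C j, le_rfl, hCc j, hEC j, .inl ((Function.update_eq_self j C).symm ▸ ⟨hC, hsel⟩)⟩

theorem Regular.split_le_of_meets (hS : Regular G S) (hQ : Q ∈ S)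
    (hm : IsMidpoint (Q j) m) (hE : E ∈ split S j (Q j) m (Iic Q))
    (hC : C ∈ split S j (Q j) m (Iic Q)) (hCc : IsCell C) (h : ∀ k, Meets (E k) (C k)) : E ≤ C := by
  obtain ⟨E₀, hE₀, hEE₀, hEj, hEor⟩ := exists_parent hm hE
  obtain ⟨C₀, hC₀, hC₀c, hCC₀, hCj, hCor⟩ := exists_parent_cell hm hC hCc
  have hlt := hm.lt
  have hle₀ : E₀ ≤ C₀ := hS.le_of_meets E₀ hE₀ C₀ hC₀ hC₀c fun k => by
    have hk := h k
    have hCk := NonemptyInterval.le_def.1 (hCC₀ k)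
    rcases eq_or_ne k j with rfl | hkj
    · have := hCc k
      unfold Meets Overlap at hk ⊢
      rcases hEor with ⟨rfl, -⟩ | ⟨-, hI, hp⟩
      · omega
      · unfold IsPiece at hp
        rw [hI]
        rcases hCor with ⟨rfl, -⟩ | ⟨-, hI', -⟩
        · omega
        · rw [hI']
          omega
    · rw [hEj k hkj, hCj k hkj] at *
      exact hk
  rcases hCor with ⟨rfl, -⟩ | ⟨hCQ, hI, hp⟩
  · exact hEE₀.trans hle₀
  · intro k
    have hk := h k
    have hE' := (hEE₀.trans hle₀) k
    rcases eq_or_ne k j with rfl | hkj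
    · have := hS.le_or_ge_midpoint hQ hm hE (hEE₀.trans (hle₀.trans hCQ))
      have hc := hCc k
      rw [hI] at hE'
      rw [NonemptyInterval.le_def] at hE' ⊢
      unfold IsPiece at hp
      unfold Meets Overlap at hk
      omega
    · exact hCj k hkj ▸ hE'

theorem Regular.split (hS : Regular G S) (hQ : Q ∈ S) (hQc : IsCell Q) (hm : IsMidpoint (Q j) m) :
    Regular G (split S j (Q j) m (Iic Q)) where
  dyadic E hE k hk := by
    obtain ⟨E₀, hE₀, -, hEj, ⟨rfl, -⟩ | ⟨-, hI, hp⟩⟩ := exists_parent hm hE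
    · exact hS.dyadic E hE₀ k hk
    · rcases eq_or_ne k j with rfl | hkj
      · exact (hS.dyadic Q hQ k hm.1).piece hm hp hk
      · rw [hEj k hkj] at hk ⊢
        exact hS.dyadic E₀ hE₀ k hk
  le_of_meets E hE C hC hCc h := hS.split_le_of_meets hQ hm hE hC hCc h
  exists_cell_endpoint E hE k hk := by
    obtain ⟨E₀, hE₀, hEE₀, hEj, hEor⟩ := exists_parent hm hE
    by_cases hk₀ : E k = E₀ k
    · obtain ⟨C, hC, hCc, hE₀C, hCk⟩ := hS.exists_cell_endpoint E₀ hE₀ k (hk₀ ▸ hk)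
      obtain ⟨I, hIC, hI, hEI, hmem⟩ := hS.exists_child hQ hQc hm hE hC hCc (hEE₀.trans hE₀C)
      refine ⟨_, hmem, isCell_update hCc hI,
        le_update_iff.2 ⟨hEI, fun l _ => (hEE₀.trans hE₀C) l⟩, ?_⟩
      rw [← hk₀] at hCk
      rcases eq_or_ne k j with rfl | hkj
      · rw [NonemptyInterval.le_def] at hIC hEI
        simp only [Function.update_self]
        omega
      · simpa [hkj] using hCk
    · obtain rfl : k = j := by_contra fun hkj => hk₀ (hEj k hkj)
      obtain ⟨rfl, -⟩ | ⟨hE₀Q, -, hp⟩ := hEor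
      · exact absurd rfl hk₀
      have hlt := hm.lt
      have hEm : (E k).fst = m ∧ (E k).snd = m := by
        unfold IsPiece at hp
        omega
      let L : NonemptyInterval ℕ := ⟨((Q k).fst, m), hlt.1.le⟩
      refine ⟨Function.update Q k L,
        .inr ⟨Q, hQ, ⟨self_mem_Iic, rfl⟩, L, .inl ⟨rfl, rfl⟩, rfl⟩, isCell_update hQc hlt.1,
        le_update_iff.2 ⟨⟨hlt.1.le.trans_eq hEm.1.symm, hEm.2.le⟩,
          fun l _ => (hEE₀.trans hE₀Q) l⟩, .inr (by simp [hEm, L])⟩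

end Regular

/-! ### T-meshes in terms of closures -/

section Boxes

variable {d : ℕ} {N : Fin d → ℕ} {T : TMesh d N} {B C : IntBox d} {x : Fin d → ℝ} {k : Fin d}

/-- The closures of the entities of a T-mesh. -/
def TMesh.boxes (T : TMesh d N) : Set (IntBox d) := box ⁻¹' T.entities

theorem TMesh.image_boxes (T : TMesh d N) : box '' T.boxes = T.entities :=
  image_preimage_eq_of_subset fun E hE =>
    let ⟨B, _, hB⟩ := isMeshEntity_iff.1 (T.mem_entity E hE)
    ⟨B, hB⟩

theorem TMesh.snd_le (hB : B ∈ T.boxes) (k : Fin d) : (B k).snd ≤ N k := by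
  obtain ⟨C, hC, hCB⟩ := isMeshEntity_iff.1 (T.mem_entity _ hB)
  exact box_injective hCB ▸ hC k

theorem TMesh.toSet_subset_domain (hB : B ∈ T.boxes) : toSet (box B) ⊆ domain N :=
  T.union_eq ▸ subset_biUnion_of_mem (u := toSet) hB

theorem TMesh.exists_mem (hx : x ∈ domain N) : ∃ B ∈ T.boxes, x ∈ toSet (box B) := by
  rw [← T.union_eq, ← T.image_boxes, biUnion_image] at hx
  simpa using hx

theorem TMesh.eq_of_mem (hB : B ∈ T.boxes) (hC : C ∈ T.boxes) (hxB : x ∈ toSet (box B))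
    (hxC : x ∈ toSet (box C)) : B = C := by
  by_contra h
  exact (T.pairwise_disjoint _ hB _ hC (box_injective.ne h)).subset ⟨hxB, hxC⟩

theorem TMesh.ncard_le_card {A : Set (Box d)} (hA : A ⊆ T.entities) (s : Finset (Fin d → ℝ))
    (h : ∀ F ∈ A, ∃ x ∈ s, x ∈ toSet F) : A.ncard ≤ s.card := by
  choose! f hfs hfF using h
  rw [← ncard_coe_finset]
  refine ncard_le_ncard_of_injOn f (fun F hF => hfs F hF) (fun F hF F' hF' hff => ?_)
  by_contra hne
  exact (T.pairwise_disjoint F (hA hF) F' (hA hF') hne).subset ⟨hfF F hF, hff ▸ hfF F' hF'⟩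

theorem TMesh.exists_cell {u : Fin d → ℕ} (hu : ∀ k, u k < N k) :
    ∃ C ∈ T.boxes, IsCell C ∧ ∀ k, (C k).fst ≤ u k ∧ u k < (C k).snd := by
  have hdom : (fun k => (u k + 1 / 2 : ℝ)) ∈ domain N := fun k _ => by
    have : (u k : ℝ) + 1 ≤ N k := by exact_mod_cast hu k
    constructor <;> [positivity; linarith]
  obtain ⟨C, hC, hx⟩ := T.exists_mem hdom
  have hmem : ∀ k, (C k).fst ≤ u k ∧ u k < (C k).snd := fun k =>
    natCast_add_half_mem_component.1 (mem_toSet_box.1 hx k)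
  exact ⟨C, hC, fun k => (hmem k).1.trans_lt (hmem k).2, hmem⟩

theorem box_mem_Hdim_iff {s : Finset (Fin d)} (hs : ∀ k ∈ s, (B k).fst = (B k).snd) :
    box B ∈ Hdim T (d - s.card) ↔ B ∈ T.boxes ∧ ∀ k ∉ s, (B k).fst < (B k).snd := by
  refine and_congr_right fun _ => ?_
  have hcard : d - (d - s.card) = (s : Set (Fin d)).ncard := by
    rw [ncard_coe_finset, Nat.sub_sub_self (s.card_le_univ.trans_eq (Fintype.card_fin d))]
  rw [hcard, singDirs_box]
  constructor
  · intro h k hk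
    have heq := eq_of_subset_of_ncard_le (fun k hk => hs k hk) h.le (toFinite _)
    refine (B k).fst_le_snd.lt_of_ne fun hd => hk ?_
    exact Finset.mem_coe.1 (heq ▸ hd)
  · intro h
    congr 1
    ext k
    exact ⟨fun hd => by_contra fun hk => (h k hk).ne hd, hs k⟩

theorem box_mem_Hdim_self_iff : box B ∈ Hdim T d ↔ B ∈ T.boxes ∧ IsCell B := by
  simpa [IsCell] using box_mem_Hdim_iff (T := T) (B := B) (s := ∅) (by simp)

theorem box_mem_Hdim_sub_one_iff (hk : (B k).fst = (B k).snd) :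
    box B ∈ Hdim T (d - 1) ↔ B ∈ T.boxes ∧ ∀ l ≠ k, (B l).fst < (B l).snd := by
  simpa using box_mem_Hdim_iff (T := T) (s := {k}) (by simpa using hk)

theorem box_mem_Hdim_sub_two_iff {i j : Fin d} (hij : i ≠ j) (hi : (B i).fst = (B i).snd)
    (hj : (B j).fst = (B j).snd) : box B ∈ Hdim T (d - 2) ↔
      B ∈ T.boxes ∧ ∀ l, l ≠ i → l ≠ j → (B l).fst < (B l).snd := by
  simpa [Finset.card_pair hij] using box_mem_Hdim_iff (T := T) (s := {i, j}) (by simp [hi, hj])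

theorem exists_box_of_mem_entities {E : Box d} (hE : E ∈ T.entities) :
    ∃ B ∈ T.boxes, box B = E := by
  rwa [← T.image_boxes] at hE

theorem mem_skel_iff : x ∈ skel T k ↔ ∃ F ∈ T.boxes, (F k).fst = (F k).snd ∧
    (∀ l ≠ k, (F l).fst < (F l).snd) ∧ ∀ l, x l ∈ Icc ((F l).fst : ℝ) (F l).snd := by
  simp only [skel, mem_iUnion, exists_prop, mem_ofPred_eq]
  constructor
  · rintro ⟨_, ⟨hF, hk⟩, hx⟩
    obtain ⟨F, hFT, rfl⟩ := exists_box_of_mem_entities hF.1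
    have hk' := exists_component_eq_singleton_iff.1 hk
    exact ⟨F, hFT, hk', ((box_mem_Hdim_sub_one_iff hk').1 hF).2, mem_closure_toSet_box.1 hx⟩
  · rintro ⟨F, hF, hk, hl, hx⟩
    exact ⟨box F, ⟨(box_mem_Hdim_sub_one_iff hk).2 ⟨hF, hl⟩,
      exists_component_eq_singleton_iff.2 hk⟩, mem_closure_toSet_box.2 hx⟩

/-! ### Bisection steps -/

variable {S : Set (IntBox d)} {Q : IntBox d} {j : Fin d} {m : ℕ}

theorem bisectStep_split (hQ : Q ∈ S) (hQc : IsCell Q) (hQN : ∀ k, (Q k).snd ≤ N k)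
    (hm : IsMidpoint (Q j) m) :
    BisectStep N (box '' S) (box '' split S j (Q j) m (Iic Q)) := by
  refine ⟨box Q, mem_image_of_mem _ hQ, j, _, _, m,
    fun k => isIntervalComp_component_iff.2 ⟨hQc k, hQN k⟩, component_of_lt (hQc j), hm.2, ?_⟩
  simp only [box, closure_component]
  exact (midSplit_box hm Q).symm

theorem exists_split_of_bisectStep {M : Set (Box d)} (h : BisectStep N (box '' S) M) :
    ∃ Q ∈ S, ∃ j m, IsCell Q ∧ IsMidpoint (Q j) m ∧
      M = box '' split S j (Q j) m (Iic Q) := by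
  obtain ⟨_, ⟨Q, hQ, rfl⟩, j, a, b, m, hcell, hQj, hab, rfl⟩ := h
  have hQc : IsCell Q := fun k => (isIntervalComp_component_iff.1 (hcell k)).1
  have hm := isMidpoint_of_component_eq hQj hab
  refine ⟨Q, hQ, j, m, hQc, hm, ?_⟩
  simp only [box, closure_component]
  exact midSplit_box hm Q

theorem exists_tensorBoxes_of_isTensorMesh {M : Set (Box d)} (h : IsTensorMesh N M) :
    ∃ G : Fin d → Finset ℕ, (∀ k, 0 ∈ G k ∧ N k ∈ G k ∧ ∀ n ∈ G k, n ≤ N k) ∧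
      M = box '' tensorBoxes G := by
  obtain ⟨G, hG, rfl⟩ := h
  refine ⟨G, hG, Set.ext fun E => ⟨fun hE => ?_, ?_⟩⟩
  · have : ∀ k, ∃ I, ((∃ n ∈ G k, I = .pure n) ∨ IsGap (G k) I) ∧ component I = E k := fun k => by
      rcases hE k with ⟨n, hn, h⟩ | ⟨a, ha, b, hb, hab, hgap, h⟩
      · exact ⟨_, .inl ⟨n, hn, rfl⟩, (component_pure n).trans h.symm⟩
      · exact ⟨⟨(a, b), hab.le⟩, .inr ⟨ha, hb, hab, hgap⟩, (component_mk_of_lt hab).trans h.symm⟩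
    choose B hB hBE using this
    exact ⟨B, hB, funext hBE⟩
  · rintro ⟨B, hB, rfl⟩ k
    rcases hB k with ⟨n, hn, h⟩ | ⟨ha, hb, hab, hgap⟩
    · exact .inl ⟨n, hn, by rw [box, h, component_pure]⟩
    · exact .inr ⟨_, ha, _, hb, hab, hgap, component_of_lt hab⟩

theorem TMesh.regular (T : TMesh d N) (hN : ∀ k, 0 < N k) : ∃ G, Regular G T.boxes := by
  obtain ⟨M₀, htensor, hsteps⟩ := T.constructed
  obtain ⟨G, hG, rfl⟩ := exists_tensorBoxes_of_isTensorMesh htensor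
  suffices ∃ S, T.entities = box '' S ∧ Regular G S by
    obtain ⟨S, hTS, hS⟩ := this
    refine ⟨G, ?_⟩
    rwa [boxes, hTS, preimage_image_eq _ box_injective]
  generalize T.entities = M at hsteps
  induction hsteps with
  | refl => exact ⟨_, rfl, regular_tensorBoxes hN hG⟩
  | tail _ hstep ih =>
    obtain ⟨S, rfl, hS⟩ := ih
    obtain ⟨Q, hQ, j, m, hQc, hm, rfl⟩ := exists_split_of_bisectStep hstep
    exact ⟨_, rfl, hS.split hQ hQc hm⟩

end Boxes

/-! ### Admissibility in terms of cells -/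

section Cells

variable {d : ℕ} {N p : Fin d → ℕ} {T : TMesh d N} {A B F J Q : IntBox d} {i j k : Fin d}
  {x : Fin d → ℝ}

/-- The slice `S_k(n)` lies in the `k`-th frame region. -/
def FrameIdx {d : ℕ} (N p : Fin d → ℕ) (k : Fin d) (n : ℕ) : Prop :=
  n ≤ N k ∧ (n ≤ halfdeg p k ∨ N k ≤ n + halfdeg p k)

/-- The slice condition of admissibility: in every direction, the slices of the frame region lie in
the skeleton. -/
def FrameSlices {d : ℕ} {N : Fin d → ℕ} (p : Fin d → ℕ) (T : TMesh d N) : Prop :=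
  ∀ k : Fin d, ∀ n : ℕ, (n ≤ halfdeg p k ∨ (N k - halfdeg p k ≤ n ∧ n ≤ N k)) →
    slice N k n ⊆ skel T k

/-- No slice in a frame region passes through the interior of a cell of `S`. -/
def NoCross {d : ℕ} (N p : Fin d → ℕ) (S : Set (IntBox d)) : Prop :=
  ∀ k n, FrameIdx N p k n → ∀ C ∈ S, IsCell C → n ≤ (C k).fst ∨ (C k).snd ≤ n

/-- Two cells of `S` abutting from opposite sides on a slice in a frame region share a full
hyperface. -/
def Conforming {d : ℕ} (N p : Fin d → ℕ) (S : Set (IntBox d)) : Prop :=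
  ∀ k, ∀ C ∈ S, ∀ C' ∈ S, IsCell C → IsCell C' → (C k).snd = (C' k).fst →
    FrameIdx N p k (C' k).fst → (∀ l ≠ k, Overlap (C l) (C' l)) → ∀ l ≠ k, C l = C' l

theorem toSet_box_subset_frameRegion_iff (hJ : J ∈ T.boxes) (hk : (J k).fst = (J k).snd) :
    toSet (box J) ⊆ frameRegion N p k ↔ FrameIdx N p k (J k).fst := by
  have hN := hk.trans_le (T.snd_le hJ k)
  have hmem : ∀ x ∈ toSet (box J), x ∈ frameRegion N p k ↔ FrameIdx N p k (J k).fst := by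
    intro x hx
    have hxk := mem_toSet_box.1 hx k
    rw [component_of_eq hk, mem_singleton_iff] at hxk
    simp only [frameRegion, FrameIdx, mem_ofPred_eq, TMesh.toSet_subset_domain hJ hx, hxk,
      mem_union, mem_Icc, sub_le_iff_le_add, Nat.cast_nonneg, true_and, hN, Nat.cast_le, and_true]
    norm_cast
  obtain ⟨x, hx⟩ := toSet_box_nonempty J
  exact ⟨fun h => (hmem x hx).1 (h hx), fun h y hy => (hmem y hy).2 h⟩

theorem interior_domain (N : Fin d → ℕ) :
    interior (domain N) = pi univ fun k => Ioo 0 (N k : ℝ) := by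
  simp only [domain, interior_pi_set finite_univ, interior_Icc]

theorem not_toSet_box_subset_bdryDomain_iff (hJ : J ∈ T.boxes) :
    ¬toSet (box J) ⊆ bdryDomain N ↔
      ∀ k, (J k).fst = (J k).snd → 0 < (J k).fst ∧ (J k).fst < N k := by
  rw [not_subset]
  constructor
  · rintro ⟨x, hx, hxb⟩ k hk
    have hxi : x ∈ interior (domain N) :=
      by_contra fun h => hxb ⟨subset_closure (TMesh.toSet_subset_domain hJ hx), h⟩
    rw [interior_domain] at hxi
    have hxk := mem_toSet_box.1 hx k
    rw [component_of_eq hk, mem_singleton_iff] at hxk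
    simpa [hxk] using hxi k trivial
  · intro h
    obtain ⟨x, hx⟩ := toSet_box_nonempty J
    refine ⟨x, hx, fun hxb => hxb.2 ?_⟩
    rw [interior_domain]
    intro k _
    obtain ⟨h₁, h₂, h₃⟩ := mem_component.1 (mem_toSet_box.1 hx k)
    rcases (J k).fst_le_snd.eq_or_lt with hk | hk
    · obtain ⟨h0, hN⟩ := h k hk
      rw [← hk] at h₂
      exact ⟨(Nat.cast_pos.2 h0).trans_le h₁, h₂.trans_lt (Nat.cast_lt.2 hN)⟩
    · exact ⟨(Nat.cast_nonneg _).trans_lt (h₃ hk).1,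
        (h₃ hk).2.trans_le (Nat.cast_le.2 (T.snd_le hJ k))⟩

theorem frontier_component {I : NonemptyInterval ℕ} (h : I.fst < I.snd) :
    frontier (component I) = {(I.fst : ℝ), (I.snd : ℝ)} := by
  rw [component_of_lt h, frontier_Ioo (by exact_mod_cast h)]

theorem isOpen_toSet_box (hQ : IsCell Q) : IsOpen (toSet (box Q)) :=
  isOpen_set_pi finite_univ fun k _ => by
    rw [box, component_of_lt (hQ k)]
    exact isOpen_Ioo

theorem tjData_box_iff : TJData T (box J) (box Q) i j ↔
    Q ∈ T.boxes ∧ IsCell Q ∧ J ≤ Q ∧ i ≠ j ∧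
      (J i).fst = (J i).snd ∧ (Q i).fst < (J i).fst ∧ (J i).fst < (Q i).snd ∧
      (J j).fst = (J j).snd ∧ ((J j).fst = (Q j).fst ∨ (J j).fst = (Q j).snd) := by
  unfold TJData
  rw [box_mem_Hdim_self_iff]
  constructor
  · rintro ⟨⟨hQ, hQc⟩, hJQ, -, hij, hi, hj, hiQ, -, hjQ⟩
    have hi := exists_component_eq_singleton_iff.1 hi
    have hj := exists_component_eq_singleton_iff.1 hj
    simp only [box, component_of_eq hi, component_of_eq hj, component_of_lt (hQc i),
      frontier_component (hQc j), singleton_subset_iff, mem_Ioo, Nat.cast_lt, mem_insert_iff,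
      mem_singleton_iff, Nat.cast_inj] at hiQ hjQ
    exact ⟨hQ, hQc, toSet_box_subset_closure_iff.1 (hJQ.trans frontier_subset_closure), hij, hi,
      hiQ.1, hiQ.2, hj, hjQ⟩
  · rintro ⟨hQ, hQc, hJQ, hij, hi, h₁, h₂, hj, hjQ⟩
    refine ⟨⟨hQ, hQc⟩, fun x hx => ?_, ?_, hij, exists_component_eq_singleton_iff.2 hi,
      exists_component_eq_singleton_iff.2 hj, ?_, fun h => ?_, ?_⟩
    · rw [(isOpen_toSet_box hQc).frontier_eq]
      refine ⟨toSet_box_subset_closure_iff.2 hJQ hx, fun hxQ => ?_⟩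
      have hxj := mem_toSet_box.1 hx j
      have hxQj := mem_toSet_box.1 hxQ j
      rw [component_of_eq hj, mem_singleton_iff] at hxj
      rw [component_of_lt (hQc j), hxj, mem_Ioo, Nat.cast_lt, Nat.cast_lt] at hxQj
      omega
    · refine eq_empty_of_forall_notMem fun x ⟨hxJ, hxQ⟩ => ?_
      have hxi := mem_closure_toSet_box.1 hxJ i
      have hxQi := hxQ i trivial
      rw [← hi, Icc_self, mem_singleton_iff] at hxi
      simp only [box, frontier_component (hQc i), hxi, mem_insert_iff, mem_singleton_iff,
        Nat.cast_inj] at hxQi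
      omega
    · simp [box, component_of_eq hi, component_of_lt (hQc i), h₁, h₂]
    · exact (hQc i).ne (component_injective h ▸ hi)
    · simpa [box, component_of_eq hj, frontier_component (hQc j)] using hjQ

theorem update_mem_toSet_box_iff {t : ℝ} : Function.update x k t ∈ toSet (box B) ↔
    t ∈ component (B k) ∧ ∀ l ≠ k, x l ∈ component (B l) := by
  rw [mem_toSet_box, Function.forall_update_iff _ fun l t => t ∈ component (B l)]

theorem FrameSlices.noCross (h : FrameSlices p T) : NoCross N p T.boxes := by
  intro k n hn C hC hCc
  by_contra! hlt
  have hxC : Function.update (fun l => ((C l).fst + 1 / 2 : ℝ)) k n ∈ toSet (box C) :=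
    update_mem_toSet_box_iff.2 ⟨component_of_lt (hCc k) ▸
      ⟨Nat.cast_lt.2 hlt.1, Nat.cast_lt.2 hlt.2⟩,
      fun l _ => natCast_add_half_mem_component.2 ⟨le_rfl, hCc l⟩⟩
  obtain ⟨F, hF, hFk, -, hxF⟩ := mem_skel_iff.1 <| h k n (by unfold FrameIdx at hn; omega)
    ⟨TMesh.toSet_subset_domain hC hxC, Function.update_self ..⟩
  rw [Function.forall_update_iff _ fun l t => t ∈ Icc ((F l).fst : ℝ) (F l).snd] at hxF
  have hxF' : Function.update (fun l => ((C l).fst + 1 / 2 : ℝ)) k n ∈ toSet (box F) :=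
    update_mem_toSet_box_iff.2 ⟨by simpa [component_of_eq hFk, ← hFk] using hxF.1,
      fun l hl => natCast_add_half_mem_component.2 (natCast_add_half_mem_Icc.1 (hxF.2 l hl))⟩
  exact (hCc k).ne (TMesh.eq_of_mem hC hF hxC hxF' ▸ hFk)

theorem exists_update_add_half_mem (hx : x ∈ toSet (box J)) (hJF : J ≤ F)
    (hJk : (J k).fst = (J k).snd) (hFk : (F k).fst < (F k).snd)
    (h : ∀ l ≠ k, (J l).fst = (J l).snd → (F l).fst = (F l).snd) :
    ∃ u : ℕ, (u = (J k).fst ∨ u + 1 = (J k).fst) ∧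
      Function.update x k (u + 1 / 2 : ℝ) ∈ toSet (box F) := by
  obtain ⟨u, hu, hu'⟩ :
      ∃ u, (u = (J k).fst ∨ u + 1 = (J k).fst) ∧ (F k).fst ≤ u ∧ u < (F k).snd := by
    have := NonemptyInterval.le_def.1 (hJF k)
    rcases lt_or_ge (J k).fst (F k).snd with h | h
    · exact ⟨(J k).fst, by omega⟩
    · exact ⟨(J k).fst - 1, by omega⟩
  exact ⟨u, hu, update_mem_toSet_box_iff.2 ⟨natCast_add_half_mem_component.2 hu',
    fun l hl => component_subset_component (hJF l) (h l hl) (mem_toSet_box.1 hx l)⟩⟩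

theorem exists_degenerate_iff_of_mem_Hdim_sub_one (hd : 0 < d) (hF : box F ∈ Hdim T (d - 1)) :
    ∃ e, ∀ k, (F k).fst = (F k).snd ↔ k = e := by
  have h := hF.2
  rw [singDirs_box, Nat.sub_sub_self hd] at h
  obtain ⟨e, he⟩ := ncard_eq_one.1 h
  exact ⟨e, fun k => Set.ext_iff.1 he k⟩

theorem exists_update_add_half_mem_of_mem_Hdim (hij : i ≠ j) (hi : (J i).fst = (J i).snd)
    (hj : (J j).fst = (J j).snd) (hJ : box J ∈ Hdim T (d - 2)) (hx : x ∈ toSet (box J))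
    (hF : box F ∈ Hdim T (d - 1)) (hJF : J ≤ F) :
    ∃ k u, (k = i ∨ k = j) ∧ (u = (J k).fst ∨ u + 1 = (J k).fst) ∧
      Function.update x k (u + 1 / 2 : ℝ) ∈ toSet (box F) := by
  have hJne := ((box_mem_Hdim_sub_two_iff hij hi hj).1 hJ).2
  obtain ⟨e, he⟩ := exists_degenerate_iff_of_mem_Hdim_sub_one i.pos hF
  have hJe : (J e).fst = (J e).snd := by
    have := NonemptyInterval.le_def.1 (hJF e)
    have := (he e).2 rfl
    have := (J e).fst_le_snd
    omega
  have hne : ∀ k, k ≠ e → (F k).fst < (F k).snd := fun k hk =>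
    (F k).fst_le_snd.lt_of_ne (mt (he k).1 hk)
  by_cases hei : e = i
  · obtain ⟨u, hu, hmem⟩ := exists_update_add_half_mem hx hJF hj (hne j (hei ▸ hij.symm))
      fun l hlj hl => (he l).2 (hei ▸ by_contra fun hli => (hJne l hli hlj).ne hl)
    exact ⟨j, u, .inr rfl, hu, hmem⟩
  · have hej : e = j := by_contra fun hej => (hJne e hei hej).ne hJe
    obtain ⟨u, hu, hmem⟩ := exists_update_add_half_mem hx hJF hi (hne i (Ne.symm hei))
      fun l hli hl => (he l).2 (hej ▸ by_contra fun hlj => (hJne l hli hlj).ne hl)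
    exact ⟨i, u, .inl rfl, hu, hmem⟩

theorem TJData.exists_update_add_half_mem (h : TJData T (box J) (box A) i j)
    (hJ : box J ∈ Hdim T (d - 2)) (hx : x ∈ toSet (box J)) :
    ∃ v : ℕ, ∀ u : ℕ, u = (J j).fst ∨ u + 1 = (J j).fst → u ≠ v →
      Function.update x j (u + 1 / 2 : ℝ) ∈ toSet (box A) := by
  obtain ⟨-, hAc, hJA, hij, hi, hAi₁, hAi₂, hj, hAj⟩ := tjData_box_iff.1 h
  have hJne := ((box_mem_Hdim_sub_two_iff hij hi hj).1 hJ).2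
  refine ⟨if (J j).fst = (A j).fst then (J j).fst - 1 else (J j).fst, fun u hu huv =>
    update_mem_toSet_box_iff.2 ⟨natCast_add_half_mem_component.2 ?_, fun l hlj => ?_⟩⟩
  · have := hAc j
    split_ifs at huv <;> omega
  · have hxl := mem_toSet_box.1 hx l
    rcases eq_or_ne l i with rfl | hli
    · rw [component_of_eq hi, mem_singleton_iff] at hxl
      rw [component_of_lt (hAc l), hxl]
      exact ⟨Nat.cast_lt.2 hAi₁, Nat.cast_lt.2 hAi₂⟩
    · exact component_subset_component (hJA l) (fun h => absurd h (hJne l hli hlj).ne) hxl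

/- Moving the `i`-th or `j`-th coordinate of a point of `J` by `± 1 / 2` produces four points. Every
hyperface at `J` contains one of them, but one of them lies in the associated cell. -/
theorem TJData.valence_lt_four (h : TJData T (box J) (box A) i j) (hJ : box J ∈ Hdim T (d - 2)) :
    valence T (box J) < 4 := by
  classical
  obtain ⟨hA, hAc, -, hij, hi, -, -, hj, -⟩ := tjData_box_iff.1 h
  obtain ⟨x, hx⟩ := toSet_box_nonempty J
  obtain ⟨v, hv⟩ := h.exists_update_add_half_mem hJ hx
  suffices hcard : valence T (box J) ≤ Finset.card
      {Function.update x j (v + 1 / 2 : ℝ), Function.update x i ((J i).fst + 1 / 2 : ℝ),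
        Function.update x i (((J i).fst - 1 : ℕ) + 1 / 2 : ℝ)} from
    (hcard.trans Finset.card_le_three).trans_lt (by norm_num)
  refine TMesh.ncard_le_card (fun F hF => hF.1.1) _ ?_
  rintro _ ⟨hF, hJF⟩
  obtain ⟨F, hFT, rfl⟩ := exists_box_of_mem_entities hF.1
  obtain ⟨k, u, rfl | rfl, hu, hmem⟩ := exists_update_add_half_mem_of_mem_Hdim hij hi hj hJ hx hF
    (toSet_box_subset_closure_iff.1 (hJF.trans frontier_subset_closure))
  · refine ⟨_, ?_, hmem⟩
    obtain rfl | rfl : u = (J k).fst ∨ u = (J k).fst - 1 := by omega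
    all_goals simp
  · refine ⟨_, ?_, hmem⟩
    suffices u = v by simp [this]
    by_contra huv
    obtain ⟨e, he⟩ := exists_degenerate_iff_of_mem_Hdim_sub_one i.pos hF
    exact (hAc e).ne (TMesh.eq_of_mem hFT hA hmem (hv u hu huv) ▸ (he e).2 rfl)

end Cells

section TJunctions

variable {d : ℕ} {N p : Fin d → ℕ} {T : TMesh d N} {G : Fin d → Finset ℕ}
  {A B : IntBox d} {k l : Fin d} {n r : ℕ}

theorem exists_le_le_of_endpoints (hS : Regular G T.boxes) (hA : A ∈ T.boxes) (hAc : IsCell A)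
    (hB : B ∈ T.boxes) (hBc : IsCell B) {D : Set (Fin d)} {c : Fin d → ℕ}
    (hD : ∀ m ∈ D, (c m = (B m).fst ∨ c m = (B m).snd) ∧ (A m).fst ≤ c m ∧ c m ≤ (A m).snd)
    (hov : ∀ m ∉ D, Overlap (A m) (B m)) :
    ∃ J ∈ T.boxes, J ≤ A ∧ J ≤ B ∧ (∀ m ∈ D, (J m).fst = c m ∧ (J m).snd = c m) ∧
      ∀ m ∉ D, (J m).fst < (J m).snd := by
  classical
  let u : Fin d → ℕ := fun m => max (A m).fst (B m).fst
  have hu : ∀ m ∉ D, ((A m).fst ≤ u m ∧ u m < (A m).snd) ∧ (B m).fst ≤ u m ∧ u m < (B m).snd :=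
    fun m hm => ⟨⟨le_max_left .., max_lt (hAc m) (hov m hm).2⟩,
      le_max_right .., max_lt (hov m hm).1 (hBc m)⟩
  let x : Fin d → ℝ := fun m => if m ∈ D then c m else u m + 1 / 2
  have hxD : ∀ m ∈ D, x m = c m := fun m hm => if_pos hm
  have hxu : ∀ m ∉ D, x m = u m + 1 / 2 := fun m hm => if_neg hm
  have hxA : ∀ m, x m ∈ Icc ((A m).fst : ℝ) (A m).snd := fun m => by
    by_cases hm : m ∈ D
    · simpa [hxD m hm] using (hD m hm).2
    · exact hxu m hm ▸ natCast_add_half_mem_Icc.2 (hu m hm).1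
  have hxB : ∀ m, x m ∈ Icc ((B m).fst : ℝ) (B m).snd := fun m => by
    by_cases hm : m ∈ D
    · have := hBc m
      have := (hD m hm).1
      simp only [hxD m hm, mem_Icc, Nat.cast_le]
      omega
    · exact hxu m hm ▸ natCast_add_half_mem_Icc.2 (hu m hm).2
  obtain ⟨J, hJ, hxJ⟩ := T.exists_mem (x := x) fun m _ =>
    Icc_subset_Icc (Nat.cast_nonneg _) (Nat.cast_le.2 (T.snd_le hA m)) (hxA m)
  rw [mem_toSet_box] at hxJ
  have hJA := hS.le_of_meets J hJ A hA hAc fun m => meets_of_mem (hxJ m) (hxA m)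
  have hJB := hS.le_of_meets J hJ B hB hBc fun m => meets_of_mem (hxJ m) (hxB m)
  refine ⟨J, hJ, hJA, hJB, fun m hm => ?_, fun m hm => ?_⟩
  · have := NonemptyInterval.le_def.1 (hJB m)
    have hc := mem_component.1 (hxD m hm ▸ hxJ m)
    simp only [Nat.cast_le, Nat.cast_lt] at hc
    have := (hD m hm).1
    omega
  · have := natCast_add_half_mem_component.1 (hxu m hm ▸ hxJ m)
    omega

/-- The T-junction condition of admissibility: no T-junction with orthogonal or pointing direction
`k` lies in the `k`-th frame region. -/
def FrameTJunctionFree {d : ℕ} {N : Fin d → ℕ} (p : Fin d → ℕ) (T : TMesh d N) : Prop :=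
  ∀ k : Fin d, ∀ J Q : Box d, ∀ i j : Fin d, IsTJunction T J → TJData T J Q i j →
    (i = k ∨ j = k) → ¬toSet J ⊆ frameRegion N p k

theorem FrameTJunctionFree.not_hanging (hT : FrameTJunctionFree p T) (hS : Regular G T.boxes)
    (hA : A ∈ T.boxes) (hAc : IsCell A) (hB : B ∈ T.boxes) (hBc : IsCell B)
    (hn : FrameIdx N p k n) (hk : ((A k).snd = n ∧ (B k).fst = n) ∨ ((B k).snd = n ∧ (A k).fst = n))
    (hov : ∀ m ≠ k, Overlap (A m) (B m)) (hl : l ≠ k) (hr : r = (B l).fst ∨ r = (B l).snd) :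
    ¬((A l).fst < r ∧ r < (A l).snd) := by
  intro hrA
  have hc : ∀ m ∈ ({l, k} : Set (Fin d)), (Function.update (fun _ => n) l r m = (B m).fst ∨
      Function.update (fun _ => n) l r m = (B m).snd) ∧
      (A m).fst ≤ Function.update (fun _ => n) l r m ∧
      Function.update (fun _ => n) l r m ≤ (A m).snd := by
    have := hAc k
    rintro m (rfl | rfl)
    · simp only [Function.update_self]
      omega
    · simp only [Function.update_of_ne hl.symm]
      omega
  obtain ⟨J, hJ, hJA, -, hJD, hJne⟩ := exists_le_le_of_endpoints hS hA hAc hB hBc hc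
    fun m hm => hov m fun h => hm (.inr h)
  obtain ⟨hJl, hJl'⟩ := hJD l (.inl rfl)
  obtain ⟨hJk, hJk'⟩ := hJD k (.inr rfl)
  simp only [Function.update_self, Function.update_of_ne hl.symm] at hJl hJl' hJk hJk'
  have hdata : TJData T (box J) (box A) l k :=
    tjData_box_iff.2 ⟨hA, hAc, hJA, hl, by omega, by omega, by omega, by omega, by omega⟩
  have hH : box J ∈ Hdim T (d - 2) := (box_mem_Hdim_sub_two_iff hl (by omega) (by omega)).2
    ⟨hJ, fun m hml hmk => hJne m fun h => h.elim hml hmk⟩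
  have hbdry : ¬toSet (box J) ⊆ bdryDomain N := by
    refine (not_toSet_box_subset_bdryDomain_iff hJ).2 fun m hm => ?_
    have hm' : m = l ∨ m = k := by_contra fun h => (hJne m h).ne hm
    have hAk := hAc k
    have hBk := hBc k
    have hAN := T.snd_le hA
    have hBN := T.snd_le hB k
    have := hAN k
    have := hAN l
    obtain rfl | rfl := hm' <;> omega
  exact hT k (box J) (box A) l k ⟨hH, hbdry, hdata.valence_lt_four hH⟩ hdata (.inr rfl)
    ((toSet_box_subset_frameRegion_iff hJ (by omega)).2 (hJk ▸ hn))

theorem FrameTJunctionFree.conforming (hT : FrameTJunctionFree p T) (hS : Regular G T.boxes) :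
    Conforming N p T.boxes := by
  intro k C hC C' hC' hCc hCc' hk hn hov l hl
  have h := fun r (hr : r = (C' l).fst ∨ r = (C' l).snd) =>
    hT.not_hanging hS hC hCc hC' hCc' hn (.inl ⟨hk, rfl⟩) hov hl hr
  have h' := fun r (hr : r = (C l).fst ∨ r = (C l).snd) =>
    hT.not_hanging hS hC' hCc' hC hCc hn (.inr ⟨hk, rfl⟩) (fun m hm => (hov m hm).symm) hl hr
  have h₁ := h _ (.inl rfl)
  have h₂ := h _ (.inr rfl)
  have h₃ := h' _ (.inl rfl)
  have h₄ := h' _ (.inr rfl)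
  have hovl := hov l hl
  unfold Overlap at hovl
  apply NonemptyInterval.toProd_injective
  ext <;> omega

theorem Conforming.frameTJunctionFree (hconf : Conforming N p T.boxes)
    (hcross : NoCross N p T.boxes) (hS : Regular G T.boxes) : FrameTJunctionFree p T := by
  rintro k J' Q' i j ⟨hJH, hbdry, -⟩ hdata hijk hframe
  obtain ⟨J, hJ, rfl⟩ := exists_box_of_mem_entities hJH.1
  obtain ⟨Q, hQ, rfl⟩ := exists_box_of_mem_entities hdata.1.1
  obtain ⟨-, hQc, hJQ, hij, hi, hi₁, hi₂, hj, hjQ⟩ := tjData_box_iff.1 hdata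
  have hJne := ((box_mem_Hdim_sub_two_iff hij hi hj).1 hJH).2
  have hn := (toSet_box_subset_frameRegion_iff hJ (by obtain rfl | rfl := hijk <;> assumption)).1
    hframe
  obtain rfl | rfl := hijk
  · have := hcross i _ hn Q hQ hQc
    omega
  obtain ⟨C, hC, hCc, hJC, hCi⟩ := hS.exists_cell_endpoint J hJ i hi
  have hov : ∀ m ≠ j, Overlap (Q m) (C m) := fun m hmj => by
    rcases eq_or_ne m i with rfl | hmi
    · have := hCc m
      unfold Overlap
      omega
    · exact (overlap_self (hJne m hmi hmj)).mono (hJQ m) (hJC m)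
  have hne : Q i ≠ C i := fun h => by
    rw [← h] at hCi
    omega
  have hjC := NonemptyInterval.le_def.1 (hJC j)
  have hCj : (J j).fst = (C j).fst ∨ (J j).fst = (C j).snd := by
    have := hcross j _ hn C hC hCc
    omega
  have hQC : ¬Overlap (Q j) (C j) := fun h => hne <| congrFun
    (hS.eq_of_overlap hQ hC hQc hCc fun m => (eq_or_ne m j).elim (· ▸ h) (hov m)) i
  have hQj := hQc j
  have hCj' := hCc j
  unfold Overlap at hQC
  obtain ⟨hQn, hCn⟩ | ⟨hCn, hQn⟩ : ((Q j).snd = (J j).fst ∧ (C j).fst = (J j).fst) ∨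
      ((C j).snd = (J j).fst ∧ (Q j).fst = (J j).fst) := by omega
  · exact hne (hconf j Q hQ C hC hQc hCc (hQn.trans hCn.symm) (hCn ▸ hn) hov i hij)
  · exact hne (hconf j C hC Q hQ hCc hQc (hCn.trans hQn.symm) (hQn ▸ hn)
      (fun m hm => (hov m hm).symm) i hij).symm

theorem admissible_iff (hS : Regular G T.boxes) :
    Admissible p T ↔ FrameSlices p T ∧ Conforming N p T.boxes :=
  ⟨fun h => ⟨h.2, FrameTJunctionFree.conforming h.1 hS⟩,
    fun h => ⟨h.2.frameTJunctionFree h.1.noCross hS, h.1⟩⟩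

end TJunctions

/-! ### The extended region -/

section Extend

variable {d : ℕ} {N p : Fin d → ℕ} {T : TMesh d N} {G : Fin d → Finset ℕ} {S : Set (IntBox d)}
  {C Q : IntBox d} {j k : Fin d} {u m : ℕ}

/-- The box `Q` extended to the domain boundary in every direction `k ≠ j` in which it touches the
frame region. -/
def extend {d : ℕ} (N p : Fin d → ℕ) (Q : IntBox d) (j : Fin d) : IntBox d := fun k =>
  ⟨(if k ≠ j ∧ (Q k).fst = halfdeg p k then 0 else (Q k).fst,
      if k ≠ j ∧ (Q k).snd + halfdeg p k = N k then N k else (Q k).snd), by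
    have := (Q k).fst_le_snd
    dsimp only
    split_ifs <;> omega⟩

theorem le_extend : Q ≤ extend N p Q j := fun k => by
  have := (Q k).fst_le_snd
  rw [NonemptyInterval.le_def]
  dsimp only [extend]
  split_ifs <;> omega

theorem extend_self : extend N p Q j j = Q j := by simp [extend]

theorem isCell_extend (hQ : IsCell Q) : IsCell (extend N p Q j) := fun k =>
  (le_extend k).1.trans_lt ((hQ k).trans_le (le_extend k).2)

theorem extend_fst_cases : (extend N p Q j k).fst = (Q k).fst ∨
    k ≠ j ∧ (Q k).fst = halfdeg p k ∧ (extend N p Q j k).fst = 0 := by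
  dsimp only [extend]
  split_ifs with h
  exacts [.inr ⟨h.1, h.2, rfl⟩, .inl rfl]

theorem extend_snd_cases : (extend N p Q j k).snd = (Q k).snd ∨
    k ≠ j ∧ (Q k).snd + halfdeg p k = N k ∧ (extend N p Q j k).snd = N k := by
  dsimp only [extend]
  split_ifs with h
  exacts [.inr ⟨h.1, h.2, rfl⟩, .inl rfl]

theorem extend_snd_le (h : (Q k).snd ≤ N k) : (extend N p Q j k).snd ≤ N k := by
  rcases extend_snd_cases (N := N) (p := p) (Q := Q) (j := j) (k := k) with h' | ⟨-, -, h'⟩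
  exacts [h' ▸ h, h'.le]

theorem extendD_box (hQ : IsCell Q) :
    extendD N p (box Q) j =
      fun k => Icc ((extend N p Q j k).fst : ℝ) (extend N p Q j k).snd := by
  funext k
  have hlt : ((Q k).fst : ℝ) < (Q k).snd := Nat.cast_lt.2 (hQ k)
  have hsup : ((Q k).snd : ℝ) = N k - halfdeg p k ↔ (Q k).snd + halfdeg p k = N k := by
    rw [eq_sub_iff_add_eq]
    exact_mod_cast Iff.rfl
  have hfst : (0 : ℝ) ≤ (Q k).fst := Nat.cast_nonneg _
  ext x
  simp only [extendD, box, component_of_lt (hQ k), csInf_Ioo hlt, csSup_Ioo hlt,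
    closure_Ioo hlt.ne, Nat.cast_inj, hsup, extend, ← and_assoc, mem_union, mem_ofPred_eq, mem_Icc,
    Nat.cast_ite, Nat.cast_zero]
  grind

theorem subdivEntities_box (hQ : IsCell Q) (hm : IsMidpoint (Q j) m) :
    subdivEntities N p (box '' S) (box Q) j =
      box '' split S j (Q j) m (Iic (extend N p Q j)) := by
  have hlt : ((Q j).fst : ℝ) < (Q j).snd := Nat.cast_lt.2 (hQ j)
  have hmid : (sInf (box Q j) + sSup (box Q j)) / 2 = (m : ℝ) := by
    rw [box, component_of_lt (hQ j), csInf_Ioo hlt, csSup_Ioo hlt, div_eq_iff two_ne_zero, mul_comm]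
    exact_mod_cast hm.2
  rw [subdivEntities, hmid, extendD_box hQ, midSplit_box hm]

theorem subset_activeRegion_iff : toSet (box Q) ⊆ activeRegion N p ↔
    ∀ k, halfdeg p k ≤ (Q k).fst ∧ (Q k).snd + halfdeg p k ≤ N k := by
  rw [activeRegion, toSet_box_subset_pi_iff]
  refine forall_congr' fun k => ?_
  rw [← isClosed_Icc.closure_subset_iff, closure_component,
    Icc_subset_Icc_iff (by exact_mod_cast (Q k).fst_le_snd), le_sub_iff_add_le]
  exact_mod_cast Iff.rfl

theorem extend_fst_eq_zero_of_frameIdx (hQ : IsCell Q)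
    (hQk : halfdeg p k ≤ (Q k).fst ∧ (Q k).snd + halfdeg p k ≤ N k) (hk : k ≠ j)
    (h : FrameIdx N p k (extend N p Q j k).fst) : (extend N p Q j k).fst = 0 := by
  have := hQ k
  unfold FrameIdx at h
  dsimp only [extend] at h ⊢
  grind

theorem extend_snd_eq_of_frameIdx (hQ : IsCell Q)
    (hQk : halfdeg p k ≤ (Q k).fst ∧ (Q k).snd + halfdeg p k ≤ N k) (hk : k ≠ j)
    (h : FrameIdx N p k (extend N p Q j k).snd) : (extend N p Q j k).snd = N k := by
  have := hQ k
  unfold FrameIdx at h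
  dsimp only [extend] at h ⊢
  grind

theorem not_frameIdx_of_isMidpoint (hm : IsMidpoint (Q k) m)
    (hQk : halfdeg p k ≤ (Q k).fst ∧ (Q k).snd + halfdeg p k ≤ N k) : ¬FrameIdx N p k m := by
  have := hm.lt
  unfold FrameIdx
  omega

theorem Conforming.exists_neighbor (hconf : Conforming N p T.boxes)
    (hcross : NoCross N p T.boxes) (hC : C ∈ T.boxes) (hCc : IsCell C) (hu : u < N k)
    (h : (u = (C k).snd ∧ FrameIdx N p k u) ∨ (u + 1 = (C k).fst ∧ FrameIdx N p k (u + 1))) :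
    ∃ C' ∈ T.boxes, IsCell C' ∧ (∀ l ≠ k, C' l = C l) ∧ (C' k).fst ≤ u ∧ u < (C' k).snd := by
  let v : Fin d → ℕ := Function.update (fun l => (C l).fst) k u
  have hvk : v k = u := Function.update_self ..
  have hvl : ∀ l ≠ k, v l = (C l).fst := fun l hl => Function.update_of_ne hl ..
  obtain ⟨C', hC', hCc', hv⟩ := T.exists_cell (u := v) fun l => by
    rcases eq_or_ne l k with rfl | hl
    · rwa [hvk]
    · exact hvl l hl ▸ (hCc l).trans_le (T.snd_le hC l)
  have huC' := hvk ▸ hv k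
  have hov : ∀ l ≠ k, Overlap (C' l) (C l) := fun l hl => by
    have hl' := hvl l hl ▸ hv l
    exact ⟨hl'.1.trans_lt (hCc l), hl'.2⟩
  refine ⟨C', hC', hCc', ?_, huC'⟩
  rcases h with ⟨hCu, hidx⟩ | ⟨hCu, hidx⟩
  · have hfst : (C' k).fst = u := by
      have := hcross k u hidx C' hC' hCc'
      omega
    exact fun l hl => (hconf k C hC C' hC' hCc hCc' (hCu.symm.trans hfst.symm) (hfst ▸ hidx)
      (fun m hm => (hov m hm).symm) l hl).symm
  · have hsnd : (C' k).snd = u + 1 := by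
      have := hcross k (u + 1) hidx C' hC' hCc'
      omega
    exact hconf k C' hC' C hC hCc' hCc (hsnd.trans hCu) (hCu ▸ hidx) hov

theorem Conforming.exists_above (hconf : Conforming N p T.boxes) (hcross : NoCross N p T.boxes)
    (hC : C ∈ T.boxes) (hCc : IsCell C) (hu : (C k).snd ≤ u) (huN : u < N k)
    (hidx : ∀ n, (C k).snd ≤ n → n ≤ u → FrameIdx N p k n) :
    ∃ C' ∈ T.boxes, IsCell C' ∧ (∀ l ≠ k, C' l = C l) ∧ (C' k).fst ≤ u ∧ u < (C' k).snd := by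
  induction u, hu using Nat.le_induction with
  | base => exact hconf.exists_neighbor hcross hC hCc huN (.inl ⟨rfl, hidx _ le_rfl le_rfl⟩)
  | succ u hu ih =>
    obtain ⟨C₁, hC₁, hCc₁, hoff₁, hmem⟩ := ih (by omega) fun n hn hnu => hidx n hn (by omega)
    have hidx' := hidx (u + 1) (by omega) le_rfl
    have hsnd := hcross k _ hidx' C₁ hC₁ hCc₁
    obtain ⟨C₂, hC₂, hCc₂, hoff₂, hmem₂⟩ :=
      hconf.exists_neighbor hcross hC₁ hCc₁ huN (.inl ⟨by omega, hidx'⟩)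
    exact ⟨C₂, hC₂, hCc₂, fun l hl => (hoff₂ l hl).trans (hoff₁ l hl), hmem₂⟩

theorem Conforming.exists_below (hconf : Conforming N p T.boxes) (hcross : NoCross N p T.boxes)
    (hC : C ∈ T.boxes) (hCc : IsCell C) (hu : u + 1 ≤ (C k).fst)
    (hidx : ∀ n, u + 1 ≤ n → n ≤ (C k).fst → FrameIdx N p k n) :
    ∃ C' ∈ T.boxes, IsCell C' ∧ (∀ l ≠ k, C' l = C l) ∧ (C' k).fst ≤ u ∧ u < (C' k).snd := by
  have hN : ∀ v, v + 1 ≤ (C k).fst → v < N k := fun v hv =>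
    hv.trans ((C k).fst_le_snd.trans (T.snd_le hC k))
  obtain ⟨t, ht⟩ := Nat.exists_eq_add_of_le hu
  induction t generalizing u with
  | zero => exact hconf.exists_neighbor hcross hC hCc (hN u hu) (.inr ⟨by omega, hidx _ le_rfl hu⟩)
  | succ t ih =>
    obtain ⟨C₁, hC₁, hCc₁, hoff₁, hmem⟩ :=
      ih (u := u + 1) (by omega) (fun n hn => hidx n (by omega)) (by omega)
    have hidx' := hidx (u + 1) le_rfl hu
    have hfst := hcross k _ hidx' C₁ hC₁ hCc₁
    obtain ⟨C₂, hC₂, hCc₂, hoff₂, hmem₂⟩ :=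
      hconf.exists_neighbor hcross hC₁ hCc₁ (hN u hu) (.inr ⟨by omega, hidx'⟩)
    exact ⟨C₂, hC₂, hCc₂, fun l hl => (hoff₂ l hl).trans (hoff₁ l hl), hmem₂⟩

theorem exists_overlap_of_overlap_extend (hconf : Conforming N p T.boxes)
    (hcross : NoCross N p T.boxes) (hQ : Q ∈ T.boxes) (hQc : IsCell Q) (hC : C ∈ T.boxes)
    (hCc : IsCell C) (hov : Overlap (C k) (extend N p Q j k)) :
    ∃ C' ∈ T.boxes, IsCell C' ∧ (∀ l ≠ k, C' l = C l) ∧ Overlap (C' k) (Q k) ∧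
      (C' k = C k ∨ k ≠ j ∧ C k ≤ extend N p Q j k) := by
  have hQk := hQc k
  have hQN := T.snd_le hQ k
  have hle := NonemptyInterval.le_def.1 (le_extend (N := N) (p := p) (Q := Q) (j := j) k)
  by_cases h : Overlap (C k) (Q k)
  · exact ⟨C, hC, hCc, fun _ _ => rfl, h, .inl rfl⟩
  obtain hbelow | habove := (not_and_or.1 h).symm.imp not_lt.1 not_lt.1
  · obtain heq | ⟨hkj, hQh, hzero⟩ := extend_fst_cases (N := N) (p := p) (Q := Q) (j := j) (k := k)
    · exact absurd (heq ▸ hov.2) hbelow.not_gt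
    obtain ⟨C', hC', hCc', hoff, hfst, hsnd⟩ := hconf.exists_above hcross hC hCc hbelow
      (hQk.trans_le hQN) fun n _ hn => ⟨by omega, .inl (by omega)⟩
    exact ⟨C', hC', hCc', hoff, ⟨by omega, hsnd⟩,
      .inr ⟨hkj, hzero ▸ Nat.zero_le _, hbelow.trans (hQk.le.trans hle.2)⟩⟩
  · obtain heq | ⟨hkj, hQh, hN⟩ := extend_snd_cases (N := N) (p := p) (Q := Q) (j := j) (k := k)
    · exact absurd (heq ▸ hov.1) habove.not_gt
    obtain ⟨C', hC', hCc', hoff, hfst, hsnd⟩ := hconf.exists_below (u := (Q k).snd - 1) hcross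
      hC hCc (by omega) fun n hn hnC => ⟨hnC.trans ((hCc k).le.trans (T.snd_le hC k)),
        .inr (by omega)⟩
    exact ⟨C', hC', hCc', hoff, ⟨by omega, by omega⟩,
      .inr ⟨hkj, hle.1.trans (hQk.le.trans habove), hN ▸ T.snd_le hC k⟩⟩

/-- The cells of `S` fill up `D` without crossing its boundary, and all of them span `D` in
direction `j`. -/
def Filled (S : Set (IntBox d)) (D : IntBox d) (j : Fin d) : Prop :=
  ∀ C ∈ S, IsCell C → (∀ k, Overlap (C k) (D k)) → C ≤ D ∧ C j = D j

theorem filled_extend (hS : Regular G T.boxes) (hconf : Conforming N p T.boxes)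
    (hcross : NoCross N p T.boxes) (hQ : Q ∈ T.boxes) (hQc : IsCell Q) :
    Filled T.boxes (extend N p Q j) j := by
  intro C hC hCc hov
  have hpull : ∀ s : Finset (Fin d), ∃ C' ∈ T.boxes, IsCell C' ∧ (∀ l ∉ s, C' l = C l) ∧
      ∀ l ∈ s, Overlap (C' l) (Q l) ∧ (C' l = C l ∨ l ≠ j ∧ C l ≤ extend N p Q j l) := by
    intro s
    induction s using Finset.induction_on with
    | empty => exact ⟨C, hC, hCc, fun _ _ => rfl, by simp⟩
    | insert k s hk ih =>
      obtain ⟨C₁, hC₁, hCc₁, hoff, hon⟩ := ih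
      obtain ⟨C₂, hC₂, hCc₂, hoff₂, hovk, hor⟩ := exists_overlap_of_overlap_extend (j := j) hconf
        hcross hQ hQc hC₁ hCc₁ (hoff k hk ▸ hov k)
      refine ⟨C₂, hC₂, hCc₂, fun l hl => ?_, fun l hl => ?_⟩
      · rw [Finset.mem_insert, not_or] at hl
        rw [hoff₂ l hl.1, hoff l hl.2]
      · rcases eq_or_ne l k with rfl | hlk
        · exact ⟨hovk, hoff l hk ▸ hor⟩
        · rw [hoff₂ l hlk]
          exact hon l (Finset.mem_of_mem_insert_of_ne hl hlk)
  obtain ⟨C', hC', hCc', -, hon⟩ := hpull Finset.univ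
  obtain rfl := hS.eq_of_overlap hC' hQ hCc' hQc fun l => (hon l (Finset.mem_univ l)).1
  have hor := fun l => (hon l (Finset.mem_univ l)).2
  refine ⟨fun l => ?_, ?_⟩
  · exact (hor l).elim (fun h => h ▸ le_extend l) And.right
  · exact ((hor j).resolve_right fun h => h.1 rfl).symm.trans extend_self.symm

end Extend

/-! ### The refined mesh -/

section Refinement

variable {d : ℕ} {N : Fin d → ℕ} {T : TMesh d N} {G : Fin d → Finset ℕ} {D E : IntBox d}
  {I : NonemptyInterval ℕ} {j : Fin d} {m : ℕ}

theorem finite_setOf_isMeshEntity (N : Fin d → ℕ) : {E : Box d | IsMeshEntity N E}.Finite := by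
  have hI : ∀ k, {I : NonemptyInterval ℕ | I.snd ≤ N k}.Finite := fun k =>
    ((finite_Iic (N k, N k)).preimage NonemptyInterval.toProd_injective.injOn).subset
      fun I hI => ⟨I.fst_le_snd.trans hI, hI⟩
  refine ((Finite.pi' hI).image box).subset fun E hE => ?_
  obtain ⟨B, hB, rfl⟩ := isMeshEntity_iff.1 hE
  exact ⟨B, hB, rfl⟩

theorem Filled.exists_cell (hD : Filled T.boxes D j) (hS : Regular G T.boxes) (hDc : IsCell D)
    (hDN : ∀ k, (D k).snd ≤ N k) (hE : E ∈ T.boxes) (hED : E ≤ D) :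
    ∃ C ∈ T.boxes, IsCell C ∧ C ≤ D ∧ C j = D j ∧ E ≤ C := by
  let u : Fin d → ℕ := fun k => min (E k).fst ((D k).snd - 1)
  obtain ⟨C, hC, hCc, hu⟩ := T.exists_cell (u := u) fun k => by
    have := hDc k
    have := hDN k
    dsimp only [u]
    omega
  have hEu : ∀ k, (D k).fst ≤ u k ∧ u k ≤ (E k).fst ∧ (E k).fst ≤ u k + 1 ∧ u k < (D k).snd ∧
      ((E k).fst < (D k).snd → u k = (E k).fst) := fun k => by
    have := hDc k
    have := NonemptyInterval.le_def.1 (hED k)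
    have := (E k).fst_le_snd
    dsimp only [u]
    omega
  have hCD := hD C hC hCc fun k =>
    ⟨(hu k).1.trans_lt (hEu k).2.2.2.1, (hEu k).1.trans_lt (hu k).2⟩
  refine ⟨C, hC, hCc, hCD.1, hCD.2, hS.le_of_meets E hE C hC hCc fun k => ?_⟩
  have := hEu k
  have := hu k
  have := NonemptyInterval.le_def.1 (hED k)
  have := (E k).fst_le_snd
  unfold Meets Overlap
  omega

theorem reflTransGen_bisectStep_split (hm : IsMidpoint I m) (𝒞 : Finset (IntBox d))
    (h𝒞 : ∀ C ∈ 𝒞, C ∈ T.boxes ∧ IsCell C ∧ C j = I) :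
    Relation.ReflTransGen (BisectStep N) T.entities
      (box '' split T.boxes j I m (⋃ C ∈ 𝒞, Iic C)) := by
  classical
  induction 𝒞 using Finset.induction_on with
  | empty => simpa [split_empty, T.image_boxes] using Relation.ReflTransGen.refl
  | insert C 𝒞 _ ih =>
    have ih := ih fun B hB => h𝒞 B (Finset.mem_insert_of_mem hB)
    obtain ⟨hCT, hCc, rfl⟩ := h𝒞 C (Finset.mem_insert_self ..)
    rw [Finset.set_biUnion_insert]
    by_cases hmem : C ∈ ⋃ B ∈ 𝒞, Iic B
    · have hsub : Iic C ⊆ ⋃ B ∈ 𝒞, Iic B := by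
        simp only [mem_iUnion, mem_Iic, exists_prop] at hmem
        obtain ⟨B, hB, hCB⟩ := hmem
        exact (Iic_subset_Iic.2 hCB).trans (subset_biUnion_of_mem (u := Iic) hB)
      rwa [union_eq_self_of_subset_left hsub]
    · rw [union_comm, ← split_split hm]
      exact ih.tail (bisectStep_split (.inl ⟨hCT, fun h => hmem h.1⟩) hCc (T.snd_le hCT) hm)

theorem Filled.reflTransGen_bisectStep (hD : Filled T.boxes D j) (hS : Regular G T.boxes)
    (hDc : IsCell D) (hDN : ∀ k, (D k).snd ≤ N k) (hm : IsMidpoint (D j) m) :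
    Relation.ReflTransGen (BisectStep N) T.entities
      (box '' split T.boxes j (D j) m (Iic D)) := by
  let 𝒞 : Set (IntBox d) := {C ∈ T.boxes | IsCell C ∧ C ≤ D ∧ C j = D j}
  have h𝒞 : 𝒞.Finite := (T.finite.preimage box_injective.injOn).subset fun C hC => hC.1
  have hcover : ∀ E ∈ T.boxes, E ∈ Iic D ↔ E ∈ ⋃ C ∈ h𝒞.toFinset, Iic C := fun E hE => by
    simp only [Finite.mem_toFinset, mem_iUnion, mem_Iic, exists_prop]
    constructor
    · intro hED
      obtain ⟨C, hC, hCc, hCD, hCj, hEC⟩ := hD.exists_cell hS hDc hDN hE hED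
      exact ⟨C, ⟨hC, hCc, hCD, hCj⟩, hEC⟩
    · rintro ⟨C, hC, hEC⟩
      exact hEC.trans hC.2.2.1
  rw [split_congr hcover]
  refine reflTransGen_bisectStep_split hm h𝒞.toFinset fun C hC => ?_
  obtain ⟨hC, hCc, -, hCj⟩ := h𝒞.mem_toFinset.1 hC
  exact ⟨hC, hCc, hCj⟩

theorem Filled.exists_split (hD : Filled T.boxes D j) (hS : Regular G T.boxes) (hDc : IsCell D)
    (hDN : ∀ k, (D k).snd ≤ N k) (hm : IsMidpoint (D j) m) :
    ∃ T' : TMesh d N, T'.boxes = split T.boxes j (D j) m (Iic D) := by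
  have hmesh : ∀ E ∈ box '' split T.boxes j (D j) m (Iic D), IsMeshEntity N E := by
    rintro _ ⟨E, hE, rfl⟩
    obtain ⟨E₀, hE₀, hle, -⟩ := exists_parent hm hE
    exact isMeshEntity_iff.2 ⟨E, fun k => (hle k).2.trans (T.snd_le hE₀ k), rfl⟩
  obtain ⟨M₀, hM₀, hgen⟩ := T.constructed
  refine ⟨⟨_, (finite_setOf_isMeshEntity N).subset hmesh, hmesh, ?_, ?_, M₀, hM₀,
    hgen.trans (hD.reflTransGen_bisectStep hS hDc hDN hm)⟩,
    preimage_image_eq _ box_injective⟩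
  · rw [← T.union_eq, ← T.image_boxes]
    ext x
    simpa using exists_mem_split_iff hm
  · rintro _ ⟨E, hE, rfl⟩ _ ⟨F, hF, rfl⟩ hne
    refine eq_empty_of_forall_notMem fun x hx => hne (congrArg box ?_)
    exact eq_of_mem_split hm (fun E hE F hF => T.eq_of_mem hE hF) hE hF hx.1 hx.2

end Refinement

/-! ### Admissibility of the refined mesh -/

section Conforming

variable {d : ℕ} {N p : Fin d → ℕ} {T T' : TMesh d N} {U : Set (IntBox d)}
  {C C' D : IntBox d} {I : NonemptyInterval ℕ} {j k : Fin d} {m : ℕ}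

theorem skel_subset_skel_of_split (hm : IsMidpoint I m) (hT' : T'.boxes = split T.boxes j I m U) :
    skel T k ⊆ skel T' k := by
  intro x hx
  obtain ⟨F, hF, hk, hoff, hxF⟩ := mem_skel_iff.1 hx
  rw [mem_skel_iff, hT']
  by_cases hsel : F ∈ U ∧ F j = I
  · obtain rfl := hsel.2
    obtain ⟨h₁, h₂⟩ := hm.lt
    have hkj : k ≠ j := fun h => (h ▸ hm.1).ne hk
    have hhalf : ∃ J, IsPiece (F j) m J ∧ J.fst < J.snd ∧ x j ∈ Icc (J.fst : ℝ) J.snd := by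
      rcases le_total (x j) m with hxm | hxm
      · exact ⟨⟨(_, m), h₁.le⟩, .inl ⟨rfl, rfl⟩, h₁, (hxF j).1, hxm⟩
      · exact ⟨⟨(m, _), h₂.le⟩, .inr (.inr ⟨rfl, rfl⟩), h₂, hxm, (hxF j).2⟩
    obtain ⟨J, hJ, hJlt, hxJ⟩ := hhalf
    refine ⟨Function.update F j J, .inr ⟨F, hF, hsel, J, hJ, rfl⟩, ?_, ?_, ?_⟩
    · rwa [Function.update_of_ne hkj]
    · exact (Function.forall_update_iff F fun l K => l ≠ k → K.fst < K.snd).2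
        ⟨fun _ => hJlt, fun l _ => hoff l⟩
    · exact (Function.forall_update_iff F fun l K => x l ∈ Icc (K.fst : ℝ) K.snd).2
        ⟨hxJ, fun l _ => hxF l⟩
  · exact ⟨F, .inl ⟨hF, hsel⟩, hk, hoff, hxF⟩

theorem Filled.le_of_le_off {S : Set (IntBox d)} (hD : Filled S D j) (hC : C ∈ S)
    (hCc : IsCell C) (hoff : ∀ l ≠ k, C l ≤ D l) (hk : Overlap (C k) (D k)) : C ≤ D := by
  refine (hD C hC hCc fun l => ?_).1
  rcases eq_or_ne l k with rfl | hl
  · exact hk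
  · exact (overlap_self (hCc l)).mono le_rfl (hoff l hl)

theorem Filled.le_iff_le_of_abut (hD : Filled T.boxes D j)
    (hfst : FrameIdx N p k (D k).fst → (D k).fst = 0)
    (hsnd : FrameIdx N p k (D k).snd → (D k).snd = N k)
    (hC : C ∈ T.boxes) (hC' : C' ∈ T.boxes) (hCc : IsCell C) (hCc' : IsCell C')
    (habut : (C k).snd = (C' k).fst) (hidx : FrameIdx N p k (C' k).fst)
    (hoff : ∀ l ≠ k, C l = C' l) : C ≤ D ↔ C' ≤ D := by
  have hCk := hCc k
  have hCk' := hCc' k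
  have hN := T.snd_le hC' k
  constructor <;> intro h <;> have hk := NonemptyInterval.le_def.1 (h k)
  · refine hD.le_of_le_off hC' hCc' (fun l hl => hoff l hl ▸ h l) ⟨?_, by omega⟩
    refine habut ▸ hk.2.lt_of_ne fun heq => ?_
    have := hsnd (heq ▸ habut ▸ hidx)
    omega
  · refine hD.le_of_le_off hC hCc (fun l hl => hoff l hl ▸ h l) ⟨by omega, ?_⟩
    refine habut ▸ hk.1.lt_of_ne fun heq => ?_
    have := hfst (heq ▸ hidx)
    omega

theorem Conforming.split (hconf : Conforming N p T.boxes) (hD : Filled T.boxes D j)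
    (hm : IsMidpoint (D j) m) (hmid : ¬FrameIdx N p j m)
    (hfst : ∀ k ≠ j, FrameIdx N p k (D k).fst → (D k).fst = 0)
    (hsnd : ∀ k ≠ j, FrameIdx N p k (D k).snd → (D k).snd = N k) :
    Conforming N p (split T.boxes j (D j) m (Iic D)) := by
  intro k C hC C' hC' hCc hCc' habut hidx hov
  obtain ⟨L, hL, hLc, hCL, hoff, hor⟩ := exists_parent_cell hm hC hCc
  obtain ⟨L', hL', hLc', hCL', hoff', hor'⟩ := exists_parent_cell hm hC' hCc'
  -- the midpoint is not a frame index, so an interface at a frame index comes from the old mesh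
  have hparents : (L k).snd = (C k).snd ∧ (L' k).fst = (C' k).fst := by
    rcases eq_or_ne k j with rfl | hk
    · have hm₁ : m ≠ (C k).snd := fun h => hmid (h ▸ habut ▸ hidx)
      have hCk := hCc k
      have hCk' := hCc' k
      constructor
      · rcases hor with ⟨rfl, -⟩ | ⟨-, h, hJ⟩
        · rfl
        · unfold IsPiece at hJ
          rw [h]
          omega
      · rcases hor' with ⟨rfl, -⟩ | ⟨-, h, hJ⟩
        · rfl
        · unfold IsPiece at hJ
          rw [h]
          omega
    · exact ⟨by rw [hoff k hk], by rw [hoff' k hk]⟩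
  have hLL' : ∀ l ≠ k, L l = L' l :=
    hconf k L hL L' hL' hLc hLc' (by rw [hparents.1, habut, hparents.2])
      (hparents.2 ▸ hidx) fun l hl => (hov l hl).mono (hCL l) (hCL' l)
  intro l hl
  rcases eq_or_ne l j with rfl | hlj
  · have hle : L ≤ D ↔ L' ≤ D := hD.le_iff_le_of_abut (hfst k hl.symm) (hsnd k hl.symm) hL hL' hLc
      hLc' (by rw [hparents.1, habut, hparents.2]) (hparents.2 ▸ hidx) hLL'
    have hj := hLL' l hl
    rcases hor with ⟨rfl, hn⟩ | ⟨hU, hI, hJ⟩ <;> rcases hor' with ⟨rfl, hn'⟩ | ⟨hU', hI', hK⟩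
    · exact hj
    · exact absurd ⟨hle.2 hU', hj.trans hI'⟩ hn
    · exact absurd ⟨hle.1 hU, hj.symm.trans hI⟩ hn'
    · exact hJ.eq_of_meets hK hm (hov l hl).meets (hov l hl).symm.meets
  · rw [hoff l hlj, hoff' l hlj, hLL' l hl]

end Conforming

end TSpline

/-- Bisecting a cell `Q ⊆ AR_p` of an admissible T-mesh at an integer
midpoint via Algorithm `subdiv` yields again an admissible T-mesh. -/
theorem TSpline.subdiv_preserves_admissibility
    {d : ℕ} {N p : Fin d → ℕ} (T : TSpline.TMesh d N)
    (hadm : TSpline.Admissible p T)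
    (Q : TSpline.Box d) (hQ : Q ∈ TSpline.Hdim T d)
    (hQar : TSpline.toSet Q ⊆ TSpline.activeRegion N p)
    (j : Fin d) (a b mid : ℕ)
    (hQj : Q j = Set.Ioo (a : ℝ) (b : ℝ)) (hmid : a + b = 2 * mid) :
    ∃ T' : TSpline.TMesh d N,
      T'.entities = TSpline.subdivEntities N p T.entities Q j ∧
      TSpline.Admissible p T' := by
  obtain ⟨Q, hQT, rfl⟩ := exists_box_of_mem_entities hQ.1
  have hQc : IsCell Q := (box_mem_Hdim_self_iff.1 hQ).2
  have hactive := subset_activeRegion_iff.1 hQar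
  have hm : IsMidpoint (Q j) mid := isMidpoint_of_component_eq hQj hmid
  have hm' : IsMidpoint (extend N p Q j j) mid := extend_self.symm ▸ hm
  have hN : ∀ k, 0 < N k := fun k => (Nat.zero_le _).trans_lt ((hQc k).trans_le (T.snd_le hQT k))
  obtain ⟨G, hreg⟩ := T.regular hN
  obtain ⟨hslices, hconf⟩ := (admissible_iff hreg).1 hadm
  have hfilled := filled_extend (j := j) hreg hconf hslices.noCross hQT hQc
  obtain ⟨T', hT'⟩ :=
    hfilled.exists_split hreg (isCell_extend hQc) (fun k => extend_snd_le (T.snd_le hQT k)) hm'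
  obtain ⟨G', hreg'⟩ := T'.regular hN
  refine ⟨T', ?_, (admissible_iff hreg').2 ⟨fun k n hn => ?_, ?_⟩⟩
  · rw [← T.image_boxes, ← T'.image_boxes, hT', subdivEntities_box hQc hm, extend_self]
  · exact (hslices k n hn).trans (skel_subset_skel_of_split hm' hT')
  · exact hT' ▸ hconf.split hfilled hm' (not_frameIdx_of_isMidpoint hm (hactive j))
      (fun k => extend_fst_eq_zero_of_frameIdx hQc (hactive k))
      (fun k => extend_snd_eq_of_frameIdx hQc (hactive k))
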